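/- For every finite simple planar graph G and every positive integer h, G has a planar straight-line drawing of height h if and only if G has a flat visibility representation of height h. -/

import Mathlib

open Set

/-- A point in the plane. -/
abbrev Pt : Type := ℝ × ℝ

/-- A point has integer coordinates. -/
def IsIntPt (p : Pt) : Prop := (∃ a : ℤ, p.1 = (a : ℝ)) ∧ (∃ b : ℤ, p.2 = (b : ℝ))

/-- The (closed) segments of a polygonal chain, as pairs of consecutive corners. -/
def chainSegs (l : List Pt) : List (Pt × Pt) := l.zip l.tail

/-- The set of points covered by a polygonal chain. -/
def chainSet (l : List Pt) : Set Pt := ⋃ s ∈ chainSegs l, segment ℝ s.1 s.2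

/-- A polygonal chain is simple (non-self-intersecting): it has at least two
corners, all corners are distinct, and two of its segments meet only if they are
consecutive, and then only in their shared corner. -/
def IsSimpleChain (l : List Pt) : Prop :=
  2 ≤ l.length ∧ l.Nodup ∧
    ∀ i j : ℕ, i < j → ∀ (hi : i < (chainSegs l).length) (hj : j < (chainSegs l).length),
      segment ℝ ((chainSegs l).get ⟨i, hi⟩).1 ((chainSegs l).get ⟨i, hi⟩).2 ∩
        segment ℝ ((chainSegs l).get ⟨j, hj⟩).1 ((chainSegs l).get ⟨j, hj⟩).2 ⊆
        if j = i + 1 then {((chainSegs l).get ⟨j, hj⟩).1} else (∅ : Set Pt)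

/-- Every interior corner of the chain is a genuine bend (a direction change). -/
def GenuineBends (l : List Pt) : Prop :=
  ∀ i : ℕ, ∀ h : i + 2 < l.length,
    ¬ Collinear ℝ ({l.get ⟨i, by omega⟩, l.get ⟨i + 1, by omega⟩, l.get ⟨i + 2, h⟩} : Set Pt)

/-- The chain is a y-monotone path (horizontal segments allowed). -/
def IsMonoChain (l : List Pt) : Prop :=
  (l.map Prod.snd).Chain' (· ≤ ·) ∨ (l.map Prod.snd).Chain' (fun a b => b ≤ a)

/-- All segments of the chain are horizontal or vertical. -/
def IsOrthoChain (l : List Pt) : Prop :=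
  ∀ s ∈ chainSegs l, s.1.1 = s.2.1 ∨ s.1.2 = s.2.2

/-- A poly-line drawing of a graph `G`: every vertex is a point, and every edge
`uv` is the polygonal chain through the list `bends u v` of bend points
(listed in order from `u` to `v`). -/
structure PolylineDrawing {V : Type*} (G : SimpleGraph V) where
  pos : V → Pt
  bends : V → V → List Pt
  bends_symm : ∀ u v, bends v u = (bends u v).reverse

namespace PolylineDrawing

variable {V : Type*} {G : SimpleGraph V}

/-- The corner list of the curve of edge `uv`. -/
def chain (D : PolylineDrawing G) (u v : V) : List Pt :=
  D.pos u :: (D.bends u v ++ [D.pos v])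

/-- The set of points of the curve of edge `uv`. -/
def curve (D : PolylineDrawing G) (u v : V) : Set Pt := chainSet (D.chain u v)

/-- The defining elements of the drawing: vertex points and bends. -/
def points (D : PolylineDrawing G) : Set Pt :=
  Set.range D.pos ∪ ⋃ (u) (v) (_ : G.Adj u v), {p | p ∈ D.bends u v}

/-- The drawing is planar: vertex points are pairwise distinct, every edge curve
is a simple chain whose interior corners are genuine bends, an edge curve contains
no vertex point other than its endpoints, and two distinct edge curves intersect
only in points of common endpoints. -/
def IsPlanar (D : PolylineDrawing G) : Prop :=
  Function.Injective D.pos ∧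
  (∀ u v, G.Adj u v → IsSimpleChain (D.chain u v) ∧ GenuineBends (D.chain u v)) ∧
  (∀ u v w, G.Adj u v → w ≠ u → w ≠ v → D.pos w ∉ D.curve u v) ∧
  (∀ u v x y, G.Adj u v → G.Adj x y → s(u, v) ≠ s(x, y) →
    D.curve u v ∩ D.curve x y ⊆ D.pos '' (({u, v} : Set V) ∩ ({x, y} : Set V)))

/-- All defining elements have integer coordinates. -/
def IntCoords (D : PolylineDrawing G) : Prop := ∀ p ∈ D.points, IsIntPt p

/-- A straight-line drawing: no edge has bends. -/
def IsStraightLine (D : PolylineDrawing G) : Prop := ∀ u v : V, D.bends u v = []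

/-- Every edge curve is a y-monotone path. -/
def IsYMonotone (D : PolylineDrawing G) : Prop :=
  ∀ u v, G.Adj u v → IsMonoChain (D.chain u v)

/-- The drawing fits (after translation) in the rows `1, …, h`. -/
def InHeight (D : PolylineDrawing G) (h : ℕ) : Prop :=
  ∃ y0 : ℤ, ∀ p ∈ D.points, (y0 : ℝ) ≤ p.2 ∧ p.2 ≤ (y0 : ℝ) + (h : ℝ) - 1

/-- The drawing fits (after translation) in the columns `1, …, w`. -/
def InWidth (D : PolylineDrawing G) (w : ℕ) : Prop :=
  ∃ x0 : ℤ, ∀ p ∈ D.points, (x0 : ℝ) ≤ p.1 ∧ p.1 ≤ (x0 : ℝ) + (w : ℝ) - 1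

end PolylineDrawing

/-- An axis-parallel box (possibly degenerated to a segment or a point). -/
structure Box where
  x1 : ℝ
  x2 : ℝ
  y1 : ℝ
  y2 : ℝ
  hx : x1 ≤ x2
  hy : y1 ≤ y2

/-- The set of points of a box. -/
def Box.pts (b : Box) : Set Pt := Set.Icc b.x1 b.x2 ×ˢ Set.Icc b.y1 b.y2

/-- An orthogonal drawing of a graph `G`: every vertex is an axis-aligned box, and
every edge `uv` is an axis-parallel polygonal chain `chain u v` (its first corner is
the attachment point on the box of `u`, its last corner the attachment point on the
box of `v`). -/
structure OrthDrawing {V : Type*} (G : SimpleGraph V) where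
  box : V → Box
  chain : V → V → List Pt
  chain_symm : ∀ u v, chain v u = (chain u v).reverse

namespace OrthDrawing

variable {V : Type*} {G : SimpleGraph V}

/-- The set of points of the curve of edge `uv`. -/
def curve (D : OrthDrawing G) (u v : V) : Set Pt := chainSet (D.chain u v)

/-- The defining elements of the drawing: corners of vertex boxes, and corners
(attachment points and bends) of edge chains. -/
def points (D : OrthDrawing G) : Set Pt :=
  (⋃ v, ({((D.box v).x1, (D.box v).y1), ((D.box v).x1, (D.box v).y2),
          ((D.box v).x2, (D.box v).y1), ((D.box v).x2, (D.box v).y2)} : Set Pt)) ∪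
    ⋃ (u) (v) (_ : G.Adj u v), {p | p ∈ D.chain u v}

/-- All points covered by the drawing (boxes and edge curves). -/
def region (D : OrthDrawing G) : Set Pt :=
  (⋃ v, (D.box v).pts) ∪ ⋃ (u) (v) (_ : G.Adj u v), D.curve u v

/-- The drawing is planar: vertex boxes are pairwise disjoint; every edge curve is a
simple axis-parallel chain, with genuine bends, joining the boxes of its endpoints;
an edge curve meets a vertex box only in its attachment points; and two distinct
edge curves intersect only in common endpoints. -/
def IsPlanar (D : OrthDrawing G) : Prop :=
  (∀ u v : V, u ≠ v → Disjoint (D.box u).pts (D.box v).pts) ∧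
  (∀ u v, G.Adj u v → IsSimpleChain (D.chain u v) ∧ IsOrthoChain (D.chain u v) ∧
      GenuineBends (D.chain u v)) ∧
  (∀ u v, G.Adj u v → ∃ p q l, D.chain u v = p :: (l ++ [q]) ∧
      p ∈ (D.box u).pts ∧ q ∈ (D.box v).pts) ∧
  (∀ u v w, G.Adj u v → D.curve u v ∩ (D.box w).pts ⊆
      {p | (w = u ∧ (D.chain u v).head? = some p) ∨
           (w = v ∧ (D.chain u v).getLast? = some p)}) ∧
  (∀ u v x y, G.Adj u v → G.Adj x y → s(u, v) ≠ s(x, y) →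
      D.curve u v ∩ D.curve x y ⊆
        {p | ((D.chain u v).head? = some p ∨ (D.chain u v).getLast? = some p) ∧
             ((D.chain x y).head? = some p ∨ (D.chain x y).getLast? = some p)})

/-- A flat drawing: every vertex box is degenerated to a horizontal segment. -/
def IsFlat (D : OrthDrawing G) : Prop := ∀ v, (D.box v).y1 = (D.box v).y2

/-- A visibility representation: an orthogonal drawing without bends, i.e. every
edge is a single horizontal or vertical segment. -/
def IsVR (D : OrthDrawing G) : Prop := ∀ u v, G.Adj u v → (D.chain u v).length = 2

/-- Every edge curve is a y-monotone path. -/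
def IsYMonotone (D : OrthDrawing G) : Prop := ∀ u v, G.Adj u v → IsMonoChain (D.chain u v)

/-- All defining elements have integer coordinates. -/
def IntCoords (D : OrthDrawing G) : Prop := ∀ p ∈ D.points, IsIntPt p

/-- The drawing fits (after translation) in the rows `1, …, h`. -/
def InHeight (D : OrthDrawing G) (h : ℕ) : Prop :=
  ∃ y0 : ℤ, ∀ p ∈ D.points, (y0 : ℝ) ≤ p.2 ∧ p.2 ≤ (y0 : ℝ) + (h : ℝ) - 1

/-- The drawing fits (after translation) in the columns `1, …, w`. -/
def InWidth (D : OrthDrawing G) (w : ℕ) : Prop :=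
  ∃ x0 : ℤ, ∀ p ∈ D.points, (x0 : ℝ) ≤ p.1 ∧ p.1 ≤ (x0 : ℝ) + (w : ℝ) - 1

end OrthDrawing

/-- `G` is planar: it admits a (real-coordinate) planar straight-line drawing
(by Fáry's theorem this is equivalent to planarity for finite simple graphs). -/
def HasPlanarEmbedding {V : Type*} (G : SimpleGraph V) : Prop :=
  ∃ pos : V → Pt, Function.Injective pos ∧
    (∀ u v w, G.Adj u v → w ≠ u → w ≠ v → pos w ∉ segment ℝ (pos u) (pos v)) ∧
    ∀ u v x y, G.Adj u v → G.Adj x y → s(u, v) ≠ s(x, y) →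
      segment ℝ (pos u) (pos v) ∩ segment ℝ (pos x) (pos y) ⊆
        pos '' (({u, v} : Set V) ∩ ({x, y} : Set V))

/-- Combinatorial data of a flat visibility representation: vertices are horizontal
integer segments, edges are vertical segments at integer abscissae. -/
structure VRS (V E : Type) where
  y : V → ℤ
  l : V → ℤ
  r : V → ℤ
  a : E → V
  b : E → V
  x : E → ℤ
  hlr : ∀ v, l v ≤ r v
  hy : ∀ e, y (a e) < y (b e)
  hxa : ∀ e, l (a e) ≤ x e ∧ x e ≤ r (a e)
  hxb : ∀ e, l (b e) ≤ x e ∧ x e ≤ r (b e)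
  hdis : ∀ v w, v ≠ w → y v = y w → r v < l w ∨ r w < l v
  hnc : ∀ e v, y (a e) < y v → y v < y (b e) → x e < l v ∨ r v < x e
  hsimple : ∀ e f, a e = a f → b e = b f → e = f

namespace VRS

variable {V E : Type}

/-- The cut between columns `k` and `k+1` hits no vertex of row `t`. -/
def gap (S : VRS V E) (t k : ℤ) : Prop := ∀ v, S.y v = t → S.r v ≤ k ∨ k < S.l v

/-- Edge `e` crosses row `t`. -/
def crosses (S : VRS V E) (e : E) (t : ℤ) : Prop := S.y (S.a e) < t ∧ t < S.y (S.b e)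

/-- The structure turned upside down. -/
def flip (S : VRS V E) : VRS V E where
  y := fun v => - S.y v
  l := S.l
  r := S.r
  a := S.b
  b := S.a
  x := S.x
  hlr := S.hlr
  hy := fun e => by have := S.hy e; omega
  hxa := S.hxb
  hxb := S.hxa
  hdis := fun v w h h' => S.hdis v w h (by omega)
  hnc := fun e v h h' => S.hnc e v (by omega) (by omega)
  hsimple := fun e f h h' => S.hsimple e f h' h

lemma gap_r (S : VRS V E) (v : V) : S.gap (S.y v) (S.r v) := by
  intro w hw
  by_cases h : w = v
  · subst h; left; exact le_rfl
  · rcases S.hdis w v h hw with h1 | h1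
    · have := S.hlr v; left; omega
    · right; exact h1

lemma gap_l (S : VRS V E) (v : V) : S.gap (S.y v) (S.l v - 1) := by
  intro w hw
  by_cases h : w = v
  · subst h; right; omega
  · rcases S.hdis w v h hw with h1 | h1
    · left; omega
    · have := S.hlr v; right; omega

lemma gap_x (S : VRS V E) {e : E} {t : ℤ} (h : S.crosses e t) : S.gap t (S.x e) := by
  intro w hw
  rcases S.hnc e w (by have := h.1; omega) (by have := h.2; omega) with h1 | h1
  · right; exact h1
  · left; omega

lemma gap_x' (S : VRS V E) {e : E} {t : ℤ} (h : S.crosses e t) : S.gap t (S.x e - 1) := by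
  intro w hw
  rcases S.hnc e w (by have := h.1; omega) (by have := h.2; omega) with h1 | h1
  · right; omega
  · left; omega

/-- The properties of the potential used in the combinatorial argument. -/
structure Pot (S : VRS V E) (Φ : ℤ → ℤ → ℝ) : Prop where
  nonneg : ∀ t k, 0 ≤ Φ t k
  up : ∀ t k, S.gap t k → Φ t k = 0 → Φ (t + 1) k = 0
  down : ∀ t k, S.gap t k → Φ t k = 0 → Φ (t - 1) k = 0
  jump : ∀ t k, Φ t k ≠ Φ t (k - 1) → ∃ e, S.x e = k ∧ S.crosses e t
  left : ∃ K, ∀ t k, k ≤ K → Φ t k = 0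
  right : ∃ K, ∀ t k, K ≤ k → Φ t k = 0

lemma Pot.flip {S : VRS V E} {Φ : ℤ → ℤ → ℝ} (P : Pot S Φ) :
    Pot S.flip (fun t k => Φ (-t) k) where
  nonneg := fun t k => P.nonneg _ _
  up := fun t k hg h => by
    have := P.down (-t) k (fun v hv => hg v (by simp [VRS.flip, hv])) h
    rwa [show -(t + 1) = -t - 1 by ring]
  down := fun t k hg h => by
    have := P.up (-t) k (fun v hv => hg v (by simp [VRS.flip, hv])) h
    rwa [show -(t - 1) = -t + 1 by ring]
  jump := fun t k h => by
    obtain ⟨e, h1, h2, h3⟩ := P.jump (-t) k h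
    exact ⟨e, h1, by simp only [VRS.flip]; omega, by simp only [VRS.flip]; omega⟩
  left := by obtain ⟨K, hK⟩ := P.left; exact ⟨K, fun t k h => hK _ _ h⟩
  right := by obtain ⟨K, hK⟩ := P.right; exact ⟨K, fun t k h => hK _ _ h⟩

lemma const_of_jump {S : VRS V E} {Φ : ℤ → ℤ → ℝ}
    (hj : ∀ t k, Φ t k ≠ Φ t (k - 1) → ∃ e, S.x e = k ∧ S.crosses e t)
    (v : V) {k : ℤ} (h1 : S.l v - 1 ≤ k) (h2 : k ≤ S.r v) :
    Φ (S.y v) k = Φ (S.y v) (S.r v) := by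
  have key : ∀ n : ℕ, k + n ≤ S.r v → Φ (S.y v) k = Φ (S.y v) (k + n) := by
    intro n
    induction n with
    | zero => intro _; simp
    | succ n ih =>
      intro h
      push_cast at h ⊢
      rw [ih (by omega)]
      by_contra hne
      obtain ⟨e, he, h3, h4⟩ := hj (S.y v) (k + (n + 1)) (by
        rw [show k + ((n : ℤ) + 1) - 1 = k + n by ring]; exact fun h => hne h.symm)
      rcases S.hnc e v h3 h4 with h5 | h5 <;> omega
  have := key (S.r v - k).toNat (by omega)
  rw [this]
  congr 1
  omega

lemma Pot.const {S : VRS V E} {Φ : ℤ → ℤ → ℝ} (P : Pot S Φ) (v : V) {k : ℤ}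
    (h1 : S.l v - 1 ≤ k) (h2 : k ≤ S.r v) : Φ (S.y v) k = Φ (S.y v) (S.r v) :=
  const_of_jump P.jump v h1 h2

lemma Pot.top {S : VRS V E} {Φ : ℤ → ℤ → ℝ} (P : Pot S Φ) {e f : E} {t : ℤ}
    (he : S.crosses e t) (hf : S.crosses f t)
    (h0 : Φ t (S.x e - 1) = 0) (h1 : Φ t (S.x f) = 0)
    (hpos : ∀ k, S.x e ≤ k → k < S.x f → Φ t k ≠ 0) (hef : S.x e < S.x f) :
    S.b e = S.b f := by
  have hle : ∀ n : ℕ, t + n ≤ S.y (S.b e) → Φ (t + n) (S.x e - 1) = 0 := by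
    intro n
    induction n with
    | zero => intro _; simpa using h0
    | succ n ih =>
      intro h
      push_cast at h ⊢
      rw [← add_assoc]
      exact P.up _ _ (S.gap_x' ⟨by have := he.1; omega, by omega⟩) (ih (by omega))
  have hri : ∀ n : ℕ, t + n ≤ S.y (S.b f) → Φ (t + n) (S.x f) = 0 := by
    intro n
    induction n with
    | zero => intro _; simpa using h1
    | succ n ih =>
      intro h
      push_cast at h ⊢
      rw [← add_assoc]
      exact P.up _ _ (S.gap_x ⟨by have := hf.1; omega, by omega⟩) (ih (by omega))
  have hmid : ∀ n : ℕ, t + n < S.y (S.b e) → t + n < S.y (S.b f) →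
      ∀ k, S.x e ≤ k → k < S.x f → Φ (t + n) k ≠ 0 := by
    intro n
    induction n with
    | zero => intro _ _; simpa using hpos
    | succ n ih =>
      intro g1 g2 k k1 k2 hz
      push_cast at g1 g2 hz
      have ih' := ih (by omega) (by omega)
      by_cases hg : S.gap (t + (n + 1)) k
      · have := P.down _ _ hg hz
        rw [show t + ((n : ℤ) + 1) - 1 = t + n by ring] at this
        exact ih' k k1 k2 this
      · simp only [gap, not_forall] at hg
        obtain ⟨v, hv, hk⟩ := hg
        push Not at hk
        rw [← hv, P.const v (by omega) (by omega)] at hz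
        have := P.down _ _ (S.gap_r v) hz
        rw [hv, show t + ((n : ℤ) + 1) - 1 = t + n by ring] at this
        have hx := S.hnc f v (by have := hf.1; omega) (by omega)
        exact ih' (S.r v) (by omega) (by omega) this
  have := he.2
  have := hf.2
  rcases le_total (S.y (S.b e)) (S.y (S.b f)) with hc | hc
  · by_contra hne
    have hz := hle (S.y (S.b e) - t).toNat (by omega)
    rw [show t + ((S.y (S.b e) - t).toNat : ℤ) = S.y (S.b e) by omega] at hz
    have hxb := S.hxb e
    rw [P.const (S.b e) (by omega) (by omega)] at hz
    have hd := P.down _ _ (S.gap_r _) hz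
    have hlt : S.r (S.b e) < S.x f := by
      rcases hc.lt_or_eq with h | h
      · have := S.hnc f (S.b e) (by have := hf.1; omega) h
        omega
      · have := S.hdis _ _ hne h
        have := S.hxb f
        omega
    refine hmid (S.y (S.b e) - 1 - t).toNat (by omega) (by omega) (S.r (S.b e)) (by omega) hlt ?_
    rw [show t + ((S.y (S.b e) - 1 - t).toNat : ℤ) = S.y (S.b e) - 1 by omega]
    exact hd
  · by_contra hne
    have hz := hri (S.y (S.b f) - t).toNat (by omega)
    rw [show t + ((S.y (S.b f) - t).toNat : ℤ) = S.y (S.b f) by omega] at hz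
    have hxb := S.hxb f
    rw [P.const (S.b f) (by omega) (by omega),
      ← P.const (S.b f) (k := S.l (S.b f) - 1) (by omega) (by omega)] at hz
    have hd := P.down _ _ (S.gap_l _) hz
    have hlt : S.x e < S.l (S.b f) := by
      rcases hc.lt_or_eq with h | h
      · have := S.hnc e (S.b f) (by have := he.1; omega) h
        omega
      · have := S.hdis _ _ hne h.symm
        have := S.hxb e
        omega
    refine hmid (S.y (S.b f) - 1 - t).toNat (by omega) (by omega) (S.l (S.b f) - 1)
      (by omega) (by omega) ?_
    rw [show t + ((S.y (S.b f) - 1 - t).toNat : ℤ) = S.y (S.b f) - 1 by omega]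
    exact hd

lemma Pot.zero {S : VRS V E} {Φ : ℤ → ℤ → ℝ} (P : Pot S Φ) (t k : ℤ) : Φ t k = 0 := by
  by_contra hne
  -- the left end of the run
  obtain ⟨k1, hk1, hz1, hp1⟩ : ∃ k1, k1 < k ∧ Φ t k1 = 0 ∧ ∀ j, k1 < j → j ≤ k → Φ t j ≠ 0 := by
    obtain ⟨K, hK⟩ := P.left
    obtain ⟨ub, ⟨h1, h2⟩, h3⟩ := Int.exists_greatest_of_bdd (P := fun j => j ≤ k ∧ Φ t j = 0)
      ⟨k, fun z hz => hz.1⟩ ⟨min K k, by omega, hK _ _ (by omega)⟩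
    refine ⟨ub, lt_of_le_of_ne h1 (by rintro rfl; exact hne h2), h2, fun j hj hjk hz => ?_⟩
    have := h3 j ⟨hjk, hz⟩
    omega
  obtain ⟨k2, hk2, hz2, hp2⟩ : ∃ k2, k < k2 ∧ Φ t k2 = 0 ∧ ∀ j, k ≤ j → j < k2 → Φ t j ≠ 0 := by
    obtain ⟨K, hK⟩ := P.right
    obtain ⟨ub, ⟨h1, h2⟩, h3⟩ := Int.exists_least_of_bdd (P := fun j => k ≤ j ∧ Φ t j = 0)
      ⟨k, fun z hz => hz.1⟩ ⟨max K k, by omega, hK _ _ (by omega)⟩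
    refine ⟨ub, lt_of_le_of_ne h1 (by rintro rfl; exact hne h2), h2, fun j hj hjk hz => ?_⟩
    have := h3 j ⟨hj, hz⟩
    omega
  have hp : ∀ j, k1 < j → j < k2 → Φ t j ≠ 0 := by
    intro j h1 h2
    rcases le_total j k with h | h
    · exact hp1 j h1 h
    · exact hp2 j h h2
  obtain ⟨e, hxe, he⟩ := P.jump t (k1 + 1) (by
    rw [show k1 + 1 - 1 = k1 by ring, hz1]; exact hp _ (by omega) (by omega))
  obtain ⟨f, hxf, hf⟩ := P.jump t k2 (by
    rw [hz2]; exact (hp _ (by omega) (by omega)).symm)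
  have hb := P.top he hf (by rw [hxe, show k1 + 1 - 1 = k1 by ring, hz1]) (by rw [hxf, hz2])
    (fun j h1 h2 => hp j (by omega) (by omega)) (by omega)
  have ha := P.flip.top (e := e) (f := f) (t := -t)
    ⟨by have := he.2; simp only [VRS.flip]; omega, by have := he.1; simp only [VRS.flip]; omega⟩
    ⟨by have := hf.2; simp only [VRS.flip]; omega, by have := hf.1; simp only [VRS.flip]; omega⟩
    (by simp only [VRS.flip, neg_neg]; rw [hxe, show k1 + 1 - 1 = k1 by ring, hz1])
    (by simp only [VRS.flip, neg_neg]; rw [hxf, hz2])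
    (fun j h1 h2 => by
      simp only [VRS.flip, neg_neg] at *
      exact hp j (by omega) (by omega))
    (by simp only [VRS.flip]; omega)
  have := S.hsimple e f ha hb
  subst this
  omega
lemma pot_of_concave [Fintype V] [Fintype E] (S : VRS V E) (Φ : ℤ → ℤ → ℝ)
    (hconc : ∀ t k, S.gap t k → Φ (t + 1) k + Φ (t - 1) k - 2 * Φ t k ≤ 0)
    (hjump : ∀ t k, Φ t k ≠ Φ t (k - 1) → ∃ e, S.x e = k ∧ S.crosses e t)
    (hleft : ∃ K, ∀ t k, k ≤ K → Φ t k = 0)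
    (hT : ∃ T : ℤ, ∀ t k, t ≤ -T ∨ T ≤ t → Φ t k = 0) : Pot S Φ := by
  obtain ⟨K0, hK0⟩ := hleft
  obtain ⟨T, hT⟩ := hT
  -- a column to the right of everything
  obtain ⟨K1, hK1e, hK1v⟩ : ∃ K1 : ℤ, (∀ e, S.x e ≤ K1) ∧ ∀ v, S.r v ≤ K1 := by
    obtain ⟨A, hA⟩ := (Set.finite_range S.x).bddAbove
    obtain ⟨B, hB⟩ := (Set.finite_range S.r).bddAbove
    exact ⟨max A B, fun e => le_max_of_le_left (hA ⟨e, rfl⟩),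
      fun v => le_max_of_le_right (hB ⟨v, rfl⟩)⟩
  have hconst : ∀ t k, K1 ≤ k → Φ t k = Φ t K1 := by
    intro t k hk
    obtain ⟨n, rfl⟩ : ∃ n : ℕ, k = K1 + n := ⟨(k - K1).toNat, by omega⟩
    clear hk
    induction n with
    | zero => simp
    | succ n ih =>
      rw [← ih]
      by_contra hne
      obtain ⟨e, he, -⟩ := hjump t (K1 + (n + 1 : ℕ)) (by
        rwa [show K1 + ((n + 1 : ℕ) : ℤ) - 1 = K1 + n by push_cast; ring])
      have := hK1e e
      push_cast at he
      omega
  have hnn : ∀ t k, 0 ≤ Φ t k := by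
    by_contra! hneg
    obtain ⟨t0, k0, h0⟩ := hneg
    set B : Finset (ℤ × ℤ) := Finset.Icc (-T) T ×ˢ Finset.Icc K0 (max K0 K1) with hB
    -- every negative value is attained in the box
    have hbox : ∀ t k, Φ t k < 0 → ∃ k', (t, k') ∈ B ∧ Φ t k' = Φ t k := by
      intro t k hlt
      have h1 : -T ≤ t ∧ t ≤ T := by
        by_contra hc
        have := hT t k (by omega)
        linarith
      have h2 : K0 < k := by
        by_contra hc
        have := hK0 t k (by omega)
        linarith
      by_cases h3 : k ≤ max K0 K1
      · exact ⟨k, by simp only [hB, Finset.mem_product, Finset.mem_Icc]; omega, rfl⟩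
      · have e1 := hconst t k (by omega)
        have e2 := hconst t (max K0 K1) (by omega)
        exact ⟨max K0 K1, by simp only [hB, Finset.mem_product, Finset.mem_Icc]; omega, by
          rw [e1, e2]⟩
    obtain ⟨k0', hk0', hk0e⟩ := hbox t0 k0 h0
    obtain ⟨p, hp, hpmin⟩ := Finset.exists_min_image B (fun p => Φ p.1 p.2) ⟨_, hk0'⟩
    have hm : Φ p.1 p.2 < 0 := by
      have := hpmin _ hk0'
      simp only at this
      linarith
    have hglob : ∀ t k, Φ p.1 p.2 ≤ Φ t k := by
      intro t k
      by_cases hlt : Φ t k < 0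
      · obtain ⟨k', hk', he⟩ := hbox t k hlt
        have := hpmin _ hk'
        simp only at this
        linarith
      · linarith
    obtain ⟨q, hq, hqmax⟩ := Finset.exists_max_image
      (B.filter (fun q => Φ q.1 q.2 = Φ p.1 p.2)) (fun q => q.1) ⟨p, by simp [hp]⟩
    obtain ⟨-, hqe⟩ := Finset.mem_filter.1 hq
    have hcontra : ∀ k, S.gap q.1 k → Φ q.1 k = Φ p.1 p.2 → False := by
      intro k hg hk
      have h1 := hconc _ _ hg
      have h2 := hglob (q.1 + 1) k
      have h3 := hglob (q.1 - 1) k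
      have h4 : Φ (q.1 + 1) k = Φ p.1 p.2 := by linarith
      obtain ⟨k', hk', he⟩ := hbox (q.1 + 1) k (by linarith)
      have := hqmax (q.1 + 1, k') (by simp only [Finset.mem_filter]; exact ⟨hk', by rw [he, h4]⟩)
      simp only at this
      omega
    by_cases hg : S.gap q.1 q.2
    · exact hcontra _ hg hqe
    · simp only [gap, not_forall, not_or, not_le, not_lt] at hg
      obtain ⟨v, hv, h1, h2⟩ := hg
      have := const_of_jump hjump v (k := q.2) (by omega) (by omega)
      rw [hv] at this
      exact hcontra (S.r v) (hv ▸ S.gap_r v) (by rw [← this, hqe])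
  have hup : ∀ t k, S.gap t k → Φ t k = 0 → Φ (t + 1) k = 0 := by
    intro t k hg h
    have h1 := hconc _ _ hg
    have h2 := hnn (t + 1) k
    have h3 := hnn (t - 1) k
    linarith
  have hdown : ∀ t k, S.gap t k → Φ t k = 0 → Φ (t - 1) k = 0 := by
    intro t k hg h
    have h1 := hconc _ _ hg
    have h2 := hnn (t + 1) k
    have h3 := hnn (t - 1) k
    linarith
  refine ⟨hnn, hup, hdown, hjump, ⟨K0, hK0⟩, ⟨K1, ?_⟩⟩
  intro t k hk
  by_cases ht : t ≤ -T
  · exact hT _ _ (Or.inl ht)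
  obtain ⟨n, rfl⟩ : ∃ n : ℕ, t = -T + n := ⟨(t + T).toNat, by omega⟩
  clear ht
  induction n with
  | zero => exact hT _ _ (Or.inl (by simp))
  | succ n ih =>
    have := hup (-T + n) k (fun v _ => Or.inl ((hK1v v).trans hk)) ih
    rw [show -T + ((n + 1 : ℕ) : ℤ) = -T + n + 1 by push_cast; ring]
    exact this

/-- Activity of an object (vertex or edge) at row `t`. -/
def act (S : VRS V E) (t : ℤ) : V ⊕ E → Prop
  | Sum.inl v => S.y v = t
  | Sum.inr e => S.crosses e t

def lo (S : VRS V E) : V ⊕ E → ℤ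
  | Sum.inl v => S.l v
  | Sum.inr e => S.x e

def hi (S : VRS V E) : V ⊕ E → ℤ
  | Sum.inl v => S.r v
  | Sum.inr e => S.x e

noncomputable def al (S : VRS V E) (t : ℤ) (e : E) : ℝ :=
  ((S.y (S.b e) : ℝ) - t) / ((S.y (S.b e) : ℝ) - S.y (S.a e))

noncomputable def be (S : VRS V E) (t : ℤ) (e : E) : ℝ :=
  ((t : ℝ) - S.y (S.a e)) / ((S.y (S.b e) : ℝ) - S.y (S.a e))

lemma dpos (S : VRS V E) (e : E) : (0 : ℝ) < (S.y (S.b e) : ℝ) - S.y (S.a e) := by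
  have := S.hy e
  have : (S.y (S.a e) : ℝ) < S.y (S.b e) := by exact_mod_cast this
  linarith

lemma al_be (S : VRS V E) (t : ℤ) (e : E) : S.al t e + S.be t e = 1 := by
  have := S.dpos e
  unfold al be
  field_simp
  ring

lemma al_be' (S : VRS V E) (t : ℤ) (e : E) :
    S.al t e * S.y (S.a e) + S.be t e * S.y (S.b e) = t := by
  have := S.dpos e
  unfold al be
  field_simp
  ring

open Classical in
/-- Coefficients of the abscissa of an object at row `t`. -/
noncomputable def cX (S : VRS V E) (t : ℤ) : V ⊕ E → V → ℝ
  | Sum.inl v => Pi.single v 1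
  | Sum.inr e => S.al t e • Pi.single (S.a e) 1 + S.be t e • Pi.single (S.b e) 1

/-- Positive part of an integer, as a real. -/
noncomputable def pp (z : ℤ) : ℝ := ((max z 0 : ℤ) : ℝ)

lemma pp_neg {z : ℤ} (h : z ≤ 0) : pp z = 0 := by simp [pp, max_eq_right h]

lemma pp_pos {z : ℤ} (h : 0 ≤ z) : pp z = z := by simp [pp, max_eq_left h]

lemma pp_D2 (z : ℤ) : pp (z + 1) + pp (z - 1) - 2 * pp z = if z = 0 then 1 else 0 := by
  rcases lt_trichotomy z 0 with h | h | h
  · rw [pp_neg (by omega), pp_neg (by omega), pp_neg (by omega), if_neg (by omega)]; simp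
  · subst h
    rw [pp_pos (by omega), pp_neg (by omega), pp_neg (by omega)]; simp
  · rw [pp_pos (by omega), pp_pos (by omega), pp_pos (by omega), if_neg (by omega)]
    push_cast; ring

noncomputable def nu (S : VRS V E) (s : ℤ) : V ⊕ E → ℤ → ℤ → ℝ
  | Sum.inl _, _, _ => 0
  | Sum.inr e, t, k => if S.x e ≤ k then
      pp (t - s) - S.al s e * pp (t - S.y (S.a e)) - S.be s e * pp (t - S.y (S.b e)) else 0

noncomputable def rho [Fintype V] (S : VRS V E) (t k : ℤ) (c : V → ℝ) : ℝ :=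
  ∑ v, if S.y v = t ∧ S.r v ≤ k then c v else 0

lemma nu_low (S : VRS V E) {s : ℤ} {e : E} (h : S.crosses e s) {t : ℤ} (k : ℤ)
    (ht : t ≤ S.y (S.a e)) : S.nu s (Sum.inr e) t k = 0 := by
  have := h.1
  have := h.2
  simp only [nu]
  rw [pp_neg (by omega), pp_neg (by omega), pp_neg (by omega)]
  simp

lemma nu_high (S : VRS V E) {s : ℤ} {e : E} (h : S.crosses e s) {t : ℤ} (k : ℤ)
    (ht : S.y (S.b e) ≤ t) : S.nu s (Sum.inr e) t k = 0 := by
  have := h.1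
  have := h.2
  simp only [nu]
  rw [pp_pos (by omega), pp_pos (by omega), pp_pos (by omega)]
  have h1 := S.al_be s e
  have h2 := S.al_be' s e
  push_cast
  rw [show ((t : ℝ) - s - S.al s e * (t - S.y (S.a e)) - S.be s e * (t - S.y (S.b e)))
    = t * (1 - (S.al s e + S.be s e)) + (S.al s e * S.y (S.a e) + S.be s e * S.y (S.b e)) - s
    by ring, h1, h2]
  simp

lemma nu_D2 [Fintype V] (S : VRS V E) {s : ℤ} {o : V ⊕ E} (h : S.act s o) {t k : ℤ}
    (hg : S.gap t k) :
    S.nu s o (t + 1) k + S.nu s o (t - 1) k - 2 * S.nu s o t k =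
      (if s = t ∧ S.hi o ≤ k then 1 else 0) - S.rho t k (S.cX s o) := by
  classical
  rcases o with v | e
  · simp only [act] at h
    simp only [nu, rho, cX]
    rw [Finset.sum_eq_single v]
    · subst h
      by_cases c : S.y v = t ∧ S.r v ≤ k
      · have c2 : S.y v = t ∧ S.hi (Sum.inl v : V ⊕ E) ≤ k := c
        rw [if_pos c, if_pos c2]; simp
      · have c2 : ¬ (S.y v = t ∧ S.hi (Sum.inl v : V ⊕ E) ≤ k) := c
        rw [if_neg c, if_neg c2]; simp
    · intro w _ hw
      simp [hw]
    · simp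
  · have hy := S.hy e
    have hab : S.a e ≠ S.b e := by
      intro hc
      rw [hc] at hy
      exact lt_irrefl _ hy
    have hrho : S.rho t k (S.cX s (Sum.inr e)) =
        (if S.y (S.a e) = t ∧ S.r (S.a e) ≤ k then S.al s e else 0) +
        (if S.y (S.b e) = t ∧ S.r (S.b e) ≤ k then S.be s e else 0) := by
      simp only [rho, cX, Pi.add_apply, Pi.smul_apply, smul_eq_mul]
      have : ∀ v, (if S.y v = t ∧ S.r v ≤ k then
          S.al s e * (Pi.single (S.a e) 1 : V → ℝ) v + S.be s e * (Pi.single (S.b e) 1 : V → ℝ) v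
          else 0) = (if v = S.a e then (if S.y (S.a e) = t ∧ S.r (S.a e) ≤ k then S.al s e else 0)
            else 0) +
          (if v = S.b e then (if S.y (S.b e) = t ∧ S.r (S.b e) ≤ k then S.be s e else 0)
            else 0) := by
        intro v
        by_cases h1 : v = S.a e
        · subst h1
          simp [hab]
        · by_cases h2 : v = S.b e
          · subst h2
            simp [hab.symm]
          · simp [h1, h2]
      simp only [this, Finset.sum_add_distrib, Finset.sum_ite_eq', Finset.mem_univ, if_true]
    rw [hrho]
    have d1 := pp_D2 (t - s)
    have d2 := pp_D2 (t - S.y (S.a e))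
    have d3 := pp_D2 (t - S.y (S.b e))
    rw [show t - s + 1 = t + 1 - s by ring, show t - s - 1 = t - 1 - s by ring] at d1
    rw [show t - S.y (S.a e) + 1 = t + 1 - S.y (S.a e) by ring,
      show t - S.y (S.a e) - 1 = t - 1 - S.y (S.a e) by ring] at d2
    rw [show t - S.y (S.b e) + 1 = t + 1 - S.y (S.b e) by ring,
      show t - S.y (S.b e) - 1 = t - 1 - S.y (S.b e) by ring] at d3
    have ia : (S.y (S.a e) = t ∧ S.r (S.a e) ≤ k) ↔ (t - S.y (S.a e) = 0 ∧ S.x e ≤ k) := by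
      constructor
      · rintro ⟨h1, h2⟩
        exact ⟨by omega, (S.hxa e).2.trans h2⟩
      · rintro ⟨h1, h2⟩
        have h3 : S.y (S.a e) = t := by omega
        refine ⟨h3, ?_⟩
        rcases hg _ h3 with h4 | h4
        · exact h4
        · have := (S.hxa e).1
          omega
    have ib : (S.y (S.b e) = t ∧ S.r (S.b e) ≤ k) ↔ (t - S.y (S.b e) = 0 ∧ S.x e ≤ k) := by
      constructor
      · rintro ⟨h1, h2⟩
        exact ⟨by omega, (S.hxb e).2.trans h2⟩
      · rintro ⟨h1, h2⟩
        have h3 : S.y (S.b e) = t := by omega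
        refine ⟨h3, ?_⟩
        rcases hg _ h3 with h4 | h4
        · exact h4
        · have := (S.hxb e).1
          omega
    have is : (s = t ∧ S.hi (Sum.inr e : V ⊕ E) ≤ k) ↔ (t - s = 0 ∧ S.x e ≤ k) := by
      simp only [hi]
      constructor <;> rintro ⟨h1, h2⟩ <;> exact ⟨by omega, h2⟩
    simp only [is, ia, ib]
    by_cases hk : S.x e ≤ k
    · simp only [nu, hk, if_true, and_true]
      have e2 : S.al s e * (if t - S.y (S.a e) = 0 then 1 else 0) =
        if t - S.y (S.a e) = 0 then S.al s e else 0 := by split_ifs <;> simp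
      have e3 : S.be s e * (if t - S.y (S.b e) = 0 then 1 else 0) =
        if t - S.y (S.b e) = 0 then S.be s e else 0 := by split_ifs <;> simp
      rw [← e2, ← e3, ← d1, ← d2, ← d3]
      ring
    · simp [nu, hk]

lemma nu_jump (S : VRS V E) {s : ℤ} {o : V ⊕ E} (h : S.act s o) {t k : ℤ}
    (hne : S.nu s o t k ≠ S.nu s o t (k - 1)) : ∃ e, S.x e = k ∧ S.crosses e t := by
  rcases o with v | e
  · simp [nu] at hne
  · refine ⟨e, ?_, ?_, ?_⟩
    · by_contra hc
      apply hne
      simp only [nu]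
      by_cases h1 : S.x e ≤ k
      · rw [if_pos h1, if_pos (by omega)]
      · rw [if_neg h1, if_neg (by omega)]
    · by_contra hc
      apply hne
      rw [S.nu_low h _ (by omega), S.nu_low h _ (by omega)]
    · by_contra hc
      apply hne
      rw [S.nu_high h _ (by omega), S.nu_high h _ (by omega)]

lemma rho_sum [Fintype V] (S : VRS V E) (t k : ℤ) {ι : Type*} (s : Finset ι) (w : ι → ℝ)
    (c d : ι → V → ℝ) (h : ∑ i ∈ s, w i • (c i - d i) = 0) :
    ∑ i ∈ s, w i * (S.rho t k (c i) - S.rho t k (d i)) = 0 := by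
  classical
  have h1 : ∀ i, w i * (S.rho t k (c i) - S.rho t k (d i)) =
      ∑ v, if S.y v = t ∧ S.r v ≤ k then (w i • (c i - d i)) v else 0 := by
    intro i
    simp only [rho]
    rw [← Finset.sum_sub_distrib, Finset.mul_sum]
    apply Finset.sum_congr rfl
    intro v _
    split_ifs <;> simp
  simp only [h1]
  rw [Finset.sum_comm]
  apply Finset.sum_eq_zero
  intro v _
  split_ifs
  · rw [← Finset.sum_apply, h]; rfl
  · simp

lemma lo_le_hi (S : VRS V E) (o : V ⊕ E) : S.lo o ≤ S.hi o := by
  rcases o with v | e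
  · exact S.hlr v
  · exact le_rfl

lemma no_cert [Fintype V] [Fintype E] (S : VRS V E) {ι : Type*} [Fintype ι] (w : ι → ℝ)
    (hw : ∀ i, 0 ≤ w i) (s : ι → ℤ) (o o' : ι → V ⊕ E) (ho : ∀ i, S.act (s i) (o i))
    (ho' : ∀ i, S.act (s i) (o' i)) (hlt : ∀ i, S.hi (o i) < S.lo (o' i))
    (hsum : ∑ i, w i • (S.cX (s i) (o' i) - S.cX (s i) (o i)) = 0) : ∀ i, w i = 0 := by
  classical
  set Φ : ℤ → ℤ → ℝ := fun t k =>
    ∑ i, w i * (S.nu (s i) (o' i) t k - S.nu (s i) (o i) t k) with hΦ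
  have hD2 : ∀ t k, S.gap t k → Φ (t + 1) k + Φ (t - 1) k - 2 * Φ t k =
      - ∑ i, w i * (if s i = t ∧ S.hi (o i) ≤ k ∧ k < S.hi (o' i) then 1 else 0) := by
    intro t k hg
    have hr := S.rho_sum t k Finset.univ w _ _ hsum
    have h1 : Φ (t + 1) k + Φ (t - 1) k - 2 * Φ t k =
        ∑ i, w i * ((S.nu (s i) (o' i) (t + 1) k + S.nu (s i) (o' i) (t - 1) k
            - 2 * S.nu (s i) (o' i) t k)
          - (S.nu (s i) (o i) (t + 1) k + S.nu (s i) (o i) (t - 1) k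
            - 2 * S.nu (s i) (o i) t k)) := by
      simp only [hΦ]
      rw [Finset.mul_sum, ← Finset.sum_add_distrib, ← Finset.sum_sub_distrib]
      apply Finset.sum_congr rfl
      intro i _
      ring
    rw [h1]
    refine (add_zero _).symm.trans ?_
    rw [← Finset.sum_neg_distrib]
    refine (congrArg _ hr.symm).trans ?_
    rw [← Finset.sum_add_distrib]
    apply Finset.sum_congr rfl
    intro i _
    rw [S.nu_D2 (ho i) hg, S.nu_D2 (ho' i) hg]
    have h2 := hlt i
    have h3 := S.lo_le_hi (o' i)
    have h4 : ((if s i = t ∧ S.hi (o' i) ≤ k then 1 else 0 : ℝ)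
        - (if s i = t ∧ S.hi (o i) ≤ k then 1 else 0)) =
        - (if s i = t ∧ S.hi (o i) ≤ k ∧ k < S.hi (o' i) then 1 else 0) := by
      by_cases c1 : s i = t
      · by_cases c2 : S.hi (o' i) ≤ k
        · have c3 : S.hi (o i) ≤ k := by omega
          have c4 : ¬ k < S.hi (o' i) := by omega
          simp [c1, c2, c3]
        · by_cases c3 : S.hi (o i) ≤ k
          · have c4 : k < S.hi (o' i) := by omega
            simp [c1, c3, c4]
          · simp [c1, c2, c3]
      · simp [c1]
    rw [← mul_neg, ← h4]
    ring
  have hP : Pot S Φ := by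
    apply S.pot_of_concave
    · intro t k hg
      rw [hD2 t k hg]
      simp only [Left.neg_nonpos_iff]
      apply Finset.sum_nonneg
      intro i _
      apply mul_nonneg (hw i)
      split_ifs <;> simp
    · intro t k hne
      by_contra hc
      apply hne
      simp only [hΦ]
      apply Finset.sum_congr rfl
      intro i _
      have h1 : S.nu (s i) (o i) t k = S.nu (s i) (o i) t (k - 1) := by
        by_contra h
        exact hc (S.nu_jump (ho i) h)
      have h2 : S.nu (s i) (o' i) t k = S.nu (s i) (o' i) t (k - 1) := by
        by_contra h
        exact hc (S.nu_jump (ho' i) h)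
      rw [h1, h2]
    · obtain ⟨A, hA⟩ := (Set.finite_range S.x).bddBelow
      refine ⟨A - 1, fun t k hk => ?_⟩
      have hz : ∀ s o, S.nu s o t k = 0 := by
        intro s o
        rcases o with v | e
        · rfl
        · have := hA ⟨e, rfl⟩
          simp only [nu]
          rw [if_neg (by omega)]
      simp [hΦ, hz]
    · obtain ⟨A, hA⟩ := (Set.finite_range S.y).bddBelow
      obtain ⟨B, hB⟩ := (Set.finite_range S.y).bddAbove
      refine ⟨max (-A) B, fun t k ht => ?_⟩
      have hz : ∀ s o, S.act s o → S.nu s o t k = 0 := by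
        intro s o h
        rcases o with v | e
        · rfl
        · rcases ht with ht | ht
          · have := hA ⟨S.a e, rfl⟩
            exact S.nu_low h _ (by omega)
          · have := hB ⟨S.b e, rfl⟩
            exact S.nu_high h _ (by omega)
      simp only [hΦ]
      apply Finset.sum_eq_zero
      intro i _
      rw [hz _ _ (ho i), hz _ _ (ho' i)]
      simp
  intro i
  have hg : S.gap (s i) (S.hi (o i)) := by
    have := ho i
    rcases hoi : o i with v | e
    · rw [hoi] at this
      simp only [act] at this
      rw [← this]
      exact S.gap_r v
    · rw [hoi] at this
      exact S.gap_x this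
  have h1 := hD2 _ _ hg
  rw [hP.zero, hP.zero, hP.zero] at h1
  have h2 : ∑ j, w j * (if s j = s i ∧ S.hi (o j) ≤ S.hi (o i) ∧ S.hi (o i) < S.hi (o' j)
      then 1 else 0) = 0 := by linarith
  rw [Finset.sum_eq_zero_iff_of_nonneg] at h2
  · have h3 := h2 i (Finset.mem_univ _)
    rw [if_pos ⟨rfl, le_rfl, (hlt i).trans_le (S.lo_le_hi _)⟩] at h3
    simpa using h3
  · intro j _
    apply mul_nonneg (hw j)
    split_ifs <;> simp

/-- Abscissa of object `o` at row `t`. -/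
noncomputable def X (S : VRS V E) (p : V → ℝ) (t : ℤ) : V ⊕ E → ℝ
  | Sum.inl v => p v
  | Sum.inr e => S.al t e * p (S.a e) + S.be t e * p (S.b e)

theorem exists_real [Fintype V] [Fintype E] (S : VRS V E) :
    ∃ p : V → ℝ, ∀ (u : V) (o o' : V ⊕ E), S.act (S.y u) o → S.act (S.y u) o' →
      S.hi o < S.lo o' → S.X p (S.y u) o < S.X p (S.y u) o' := by
  classical
  let I := {i : V × (V ⊕ E) × (V ⊕ E) // S.act (S.y i.1) i.2.1 ∧ S.act (S.y i.1) i.2.2 ∧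
    S.hi i.2.1 < S.lo i.2.2}
  let A : I → V → ℝ := fun i => S.cX (S.y i.1.1) i.1.2.2 - S.cX (S.y i.1.1) i.1.2.1
  have hfin : (Set.range A).Finite := Set.finite_range A
  by_cases h0 : (0 : V → ℝ) ∈ convexHull ℝ (Set.range A)
  · exfalso
    rw [mem_convexHull_iff_exists_fintype] at h0
    obtain ⟨ι, _, w, z, hw, hw1, hz, hs⟩ := h0
    choose j hj using hz
    have := S.no_cert w hw (fun i => S.y (j i).1.1) (fun i => (j i).1.2.1) (fun i => (j i).1.2.2)
      (fun i => (j i).2.1) (fun i => (j i).2.2.1) (fun i => (j i).2.2.2) (by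
        rw [← hs]
        apply Finset.sum_congr rfl
        intro i _
        rw [← hj i])
    simp [this] at hw1
  · obtain ⟨f, u, hf1, hf2⟩ := geometric_hahn_banach_point_closed (convex_convexHull ℝ _)
      (hfin.isClosed_convexHull (𝕜 := ℝ)) h0
    rw [map_zero] at hf1
    refine ⟨fun v => f (Pi.single v 1), ?_⟩
    have hX : ∀ t o, S.X (fun v => f (Pi.single v 1)) t o = f (S.cX t o) := by
      intro t o
      rcases o with v | e
      · simp only [X, cX]
      · simp only [X, cX, map_add, map_smul, smul_eq_mul]
    intro v o o' ho ho' hlt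
    rw [hX, hX]
    have := hf2 (A ⟨(v, o, o'), ho, ho', hlt⟩) (subset_convexHull ℝ _ ⟨_, rfl⟩)
    simp only [A, map_sub] at this
    linarith

lemma X_smul (S : VRS V E) (p : V → ℝ) (c : ℝ) (t : ℤ) (o : V ⊕ E) :
    S.X (fun v => c * p v) t o = c * S.X p t o := by
  rcases o with v | e <;> simp only [X]
  ring

theorem exists_int [Fintype V] [Fintype E] (S : VRS V E) :
    ∃ p : V → ℤ, ∀ (u : V) (o o' : V ⊕ E), S.act (S.y u) o → S.act (S.y u) o' →
      S.hi o < S.lo o' → S.X (fun v => (p v : ℝ)) (S.y u) o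
        < S.X (fun v => (p v : ℝ)) (S.y u) o' := by
  classical
  obtain ⟨p, hp⟩ := S.exists_real
  let U : Set (V → ℝ) := {p | ∀ (u : V) (o o' : V ⊕ E), S.act (S.y u) o → S.act (S.y u) o' →
      S.hi o < S.lo o' → S.X p (S.y u) o < S.X p (S.y u) o'}
  have hcont : ∀ t o, Continuous fun p : V → ℝ => S.X p t o := by
    intro t o
    rcases o with v | e <;> simp only [X] <;> fun_prop
  have hU : IsOpen U := by
    have : U = ⋂ (u : V), ⋂ (o : V ⊕ E), ⋂ (o' : V ⊕ E), {p | S.act (S.y u) o →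
        S.act (S.y u) o' → S.hi o < S.lo o' → S.X p (S.y u) o < S.X p (S.y u) o'} := by
      ext p; simp [U]
    rw [this]
    refine isOpen_iInter_of_finite fun u => isOpen_iInter_of_finite fun o =>
      isOpen_iInter_of_finite fun o' => ?_
    by_cases h1 : S.act (S.y u) o ∧ S.act (S.y u) o' ∧ S.hi o < S.lo o'
    · simp only [h1, true_imp_iff]
      exact isOpen_lt (hcont _ _) (hcont _ _)
    · convert isOpen_univ
      ext p
      simp only [mem_ofPred_eq, mem_univ, iff_true]
      intro a b c
      exact absurd ⟨a, b, c⟩ h1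
  have hd : DenseRange (fun q : V → ℚ => fun v => (q v : ℝ)) :=
    DenseRange.piMap fun _ => Rat.denseRange_cast
  obtain ⟨q, hq⟩ := hd.exists_mem_open hU ⟨p, hp⟩
  set N : ℕ := ∏ v, (q v).den with hN
  have hNpos : (0 : ℝ) < N := by
    have : 0 < N := Finset.prod_pos fun v _ => (q v).den_pos
    exact_mod_cast this
  have hIntC : ∀ v, ∃ m : ℤ, (m : ℝ) = (N : ℝ) * (q v : ℝ) := by
    intro v
    obtain ⟨c, hc⟩ : (q v).den ∣ N := Finset.dvd_prod_of_mem _ (Finset.mem_univ v)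
    refine ⟨c * (q v).num, ?_⟩
    rw [hc]
    have h1 : ((q v).den : ℝ) * (q v : ℝ) = (q v).num := by
      exact_mod_cast Rat.den_mul_eq_num (q v)
    push_cast
    rw [← h1]
    ring
  choose m hm using hIntC
  refine ⟨m, fun u o o' h1 h2 h3 => ?_⟩
  have h4 : (fun v => (m v : ℝ)) = fun v => (N : ℝ) * (q v : ℝ) := funext hm
  rw [h4, X_smul, X_smul]
  exact mul_lt_mul_of_pos_left (hq u o o' h1 h2 h3) hNpos


end VRS

/-- Integer data of a flat visibility representation of `G`. The point at which the edge
`uv` attaches to the segment of `u` has abscissa `px u v`. -/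
structure FVR {V : Type} (G : SimpleGraph V) where
  y : V → ℤ
  l : V → ℤ
  r : V → ℤ
  px : V → V → ℤ
  hlr : ∀ v, l v ≤ r v
  hpx : ∀ u v, G.Adj u v → l u ≤ px u v ∧ px u v ≤ r u
  hsym : ∀ u v, G.Adj u v → y u ≠ y v → px u v = px v u
  h1 : ∀ u v, u ≠ v → y u = y v → r u < l v ∨ r v < l u
  h2 : ∀ u v w, G.Adj u v → y u < y w → y w < y v → px u v < l w ∨ r w < px u v
  h3 : ∀ u v x z, G.Adj u v → G.Adj x z → s(u, v) ≠ s(x, z) → y u < y v → y x < y z →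
    y u < y z → y x < y v → px u v ≠ px x z
  h4 : ∀ u v w, G.Adj u v → y u = y v → y w = y u → ¬ (r u < l w ∧ r w < l v)
  h5 : ∀ u v x z, G.Adj u v → G.Adj x z → y u = y v → y x < y u → y u < y z →
    ¬ (r u < px x z ∧ px x z < l v)

namespace FVR

variable {V : Type} {G : SimpleGraph V}

/-- The non-horizontal edges, oriented upwards. -/
abbrev Ed (F : FVR G) : Type := {p : V × V // G.Adj p.1 p.2 ∧ F.y p.1 < F.y p.2}

def toVRS (F : FVR G) : VRS V F.Ed where
  y := F.y
  l := F.l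
  r := F.r
  a := fun e => e.1.1
  b := fun e => e.1.2
  x := fun e => F.px e.1.1 e.1.2
  hlr := F.hlr
  hy := fun e => e.2.2
  hxa := fun e => F.hpx _ _ e.2.1
  hxb := fun e => by
    have := F.hsym _ _ e.2.1 e.2.2.ne
    rw [this]
    exact F.hpx _ _ e.2.1.symm
  hdis := F.h1
  hnc := fun e v => F.h2 _ _ _ e.2.1
  hsimple := fun e f h h' => Subtype.ext (Prod.ext h h')

/-- Abscissa of the line through `(p u, y u)` and `(p v, y v)` at height `t`. -/
noncomputable def ln (F : FVR G) (p : V → ℤ) (u v : V) (t : ℝ) : ℝ :=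
  ((F.y v : ℝ) - t) / ((F.y v : ℝ) - F.y u) * p u + (t - F.y u) / ((F.y v : ℝ) - F.y u) * p v

/-- The abscissae `p` are compatible with the representation. -/
structure Good (F : FVR G) (p : V → ℤ) : Prop where
  vv : ∀ u v, F.y u = F.y v → F.r u < F.l v → p u < p v
  ev : ∀ u v w, G.Adj u v → F.y u < F.y w → F.y w < F.y v → F.px u v < F.l w →
    F.ln p u v (F.y w) < p w
  ve : ∀ u v w, G.Adj u v → F.y u < F.y w → F.y w < F.y v → F.r w < F.px u v →
    p w < F.ln p u v (F.y w)

theorem exists_good [Fintype V] (F : FVR G) : ∃ p, F.Good p := by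
  classical
  obtain ⟨p, hp⟩ := F.toVRS.exists_int
  refine ⟨p, ?_, ?_, ?_⟩
  · intro u v h h'
    have := hp u (Sum.inl u) (Sum.inl v) rfl h.symm h'
    simp only [VRS.X] at this
    exact_mod_cast this
  · intro u v w ha h1 h2 h3
    have := hp w (Sum.inr ⟨(u, v), ha, h1.trans h2⟩) (Sum.inl w) ⟨h1, h2⟩ rfl h3
    exact this
  · intro u v w ha h1 h2 h3
    have := hp w (Sum.inl w) (Sum.inr ⟨(u, v), ha, h1.trans h2⟩) rfl ⟨h1, h2⟩ h3
    exact this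

/-- Vertex positions. -/
def pos (F : FVR G) (p : V → ℤ) (v : V) : Pt := ((p v : ℝ), (F.y v : ℝ))

lemma mem_seg {p q P : Pt} (h : P ∈ segment ℝ p q) :
    ∃ t : ℝ, 0 ≤ t ∧ t ≤ 1 ∧ P.1 = (1 - t) * p.1 + t * q.1 ∧ P.2 = (1 - t) * p.2 + t * q.2 := by
  rw [segment_eq_image] at h
  obtain ⟨t, ht, rfl⟩ := h
  exact ⟨t, ht.1, ht.2, by simp, by simp⟩

lemma seg_ln (F : FVR G) (p : V → ℤ) {u v : V} (h : F.y u < F.y v) {P : Pt}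
    (hP : P ∈ segment ℝ (F.pos p u) (F.pos p v)) :
    (F.y u : ℝ) ≤ P.2 ∧ P.2 ≤ F.y v ∧ P.1 = F.ln p u v P.2 := by
  obtain ⟨t, h0, h1, e1, e2⟩ := mem_seg hP
  simp only [pos] at e1 e2
  have hd : (F.y u : ℝ) < F.y v := by exact_mod_cast h
  have hd' : (F.y v : ℝ) - F.y u ≠ 0 := by linarith
  refine ⟨?_, ?_, ?_⟩
  · rw [e2]; nlinarith
  · rw [e2]; nlinarith
  · unfold ln
    rw [e1, e2]
    field_simp
    ring

lemma seg_hor (F : FVR G) (p : V → ℤ) {u v : V} (h : F.y u = F.y v) (h' : p u ≤ p v) {P : Pt}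
    (hP : P ∈ segment ℝ (F.pos p u) (F.pos p v)) :
    P.2 = F.y u ∧ (p u : ℝ) ≤ P.1 ∧ P.1 ≤ p v := by
  obtain ⟨t, h0, h1, e1, e2⟩ := mem_seg hP
  simp only [pos] at e1 e2
  have hd : (p u : ℝ) ≤ p v := by exact_mod_cast h'
  refine ⟨?_, ?_, ?_⟩
  · rw [e2, h]; ring
  · rw [e1]; nlinarith
  · rw [e1]; nlinarith

lemma ln_left (F : FVR G) (p : V → ℤ) {u v : V} (h : F.y u < F.y v) :
    F.ln p u v (F.y u) = p u := by
  have hd : (F.y u : ℝ) < F.y v := by exact_mod_cast h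
  have hd' : (F.y v : ℝ) - F.y u ≠ 0 := by linarith
  unfold ln
  field_simp
  ring

lemma ln_right (F : FVR G) (p : V → ℤ) {u v : V} (h : F.y u < F.y v) :
    F.ln p u v (F.y v) = p v := by
  have hd : (F.y u : ℝ) < F.y v := by exact_mod_cast h
  have hd' : (F.y v : ℝ) - F.y u ≠ 0 := by linarith
  unfold ln
  field_simp
  ring

lemma ln_affine (F : FVR G) (p : V → ℤ) {u v : V} (h : F.y u < F.y v) :
    ∃ c d : ℝ, ∀ t, F.ln p u v t = c + d * t := by
  have hd : (F.y u : ℝ) < F.y v := by exact_mod_cast h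
  have hd' : (F.y v : ℝ) - F.y u ≠ 0 := by linarith
  refine ⟨((F.y v : ℝ) * p u - F.y u * p v) / ((F.y v : ℝ) - F.y u),
    ((p v : ℝ) - p u) / ((F.y v : ℝ) - F.y u), fun t => ?_⟩
  unfold ln
  field_simp
  ring

variable {F : FVR G} {p : V → ℤ}

lemma Good.inj (hp : F.Good p) {u v : V} (hy : F.y u = F.y v) (h : p u = p v) : u = v := by
  by_contra hne
  rcases F.h1 u v hne hy with h1 | h1
  · have := hp.vv u v hy h1
    omega
  · have := hp.vv v u hy.symm h1
    omega

lemma Good.vv' (hp : F.Good p) {u v : V} (hy : F.y u = F.y v) (h : p u < p v) :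
    F.r u < F.l v := by
  rcases F.h1 u v (by rintro rfl; omega) hy with h1 | h1
  · exact h1
  · have := hp.vv v u hy.symm h1
    omega

lemma Good.pos_inj (hp : F.Good p) : Function.Injective (F.pos p) := by
  intro u v h
  simp only [pos, Prod.mk.injEq, Int.cast_inj] at h
  exact hp.inj h.2 h.1

lemma Good.VE_aux (hp : F.Good p) {u v w : V} (ha : G.Adj u v) (hu : w ≠ u) (hv : w ≠ v)
    (hlt : F.y u < F.y v ∨ F.y u = F.y v ∧ p u < p v) :
    F.pos p w ∉ segment ℝ (F.pos p u) (F.pos p v) := by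
  intro hP
  rcases hlt with hlt | ⟨hy, hlt⟩
  · obtain ⟨h1, h2, h3⟩ := F.seg_ln p hlt hP
    simp only [pos] at h1 h2 h3
    have h1' : F.y u ≤ F.y w := by exact_mod_cast h1
    have h2' : F.y w ≤ F.y v := by exact_mod_cast h2
    rcases h1'.eq_or_lt with h4 | h4
    · rw [← h4, F.ln_left p hlt] at h3
      exact hu (hp.inj h4.symm (by exact_mod_cast h3))
    rcases h2'.eq_or_lt with h5 | h5
    · rw [h5, F.ln_right p hlt] at h3
      exact hv (hp.inj h5 (by exact_mod_cast h3))
    rcases F.h2 u v w ha h4 h5 with h6 | h6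
    · have := hp.ev u v w ha h4 h5 h6
      linarith
    · have := hp.ve u v w ha h4 h5 h6
      linarith
  · obtain ⟨h1, h2, h3⟩ := F.seg_hor p hy hlt.le hP
    simp only [pos] at h1 h2 h3
    have h1' : F.y w = F.y u := by exact_mod_cast h1
    have h2' : p u ≤ p w := by exact_mod_cast h2
    have h3' : p w ≤ p v := by exact_mod_cast h3
    have h4 : p u ≠ p w := fun h => hu (hp.inj h1' h.symm)
    have h5 : p w ≠ p v := fun h => hv (hp.inj (h1'.trans hy) h)
    exact F.h4 u v w ha hy h1' ⟨hp.vv' h1'.symm (by omega), hp.vv' (h1'.trans hy) (by omega)⟩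

lemma Good.orient (hp : F.Good p) {u v : V} (hne : u ≠ v) :
    (F.y u < F.y v ∨ F.y u = F.y v ∧ p u < p v) ∨ (F.y v < F.y u ∨ F.y v = F.y u ∧ p v < p u) := by
  rcases lt_trichotomy (F.y u) (F.y v) with h | h | h
  · exact Or.inl (Or.inl h)
  · rcases lt_trichotomy (p u) (p v) with h' | h' | h'
    · exact Or.inl (Or.inr ⟨h, h'⟩)
    · exact absurd (hp.inj h h') hne
    · exact Or.inr (Or.inr ⟨h.symm, h'⟩)
  · exact Or.inr (Or.inl h)

theorem Good.VE (hp : F.Good p) {u v w : V} (ha : G.Adj u v) (hu : w ≠ u) (hv : w ≠ v) :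
    F.pos p w ∉ segment ℝ (F.pos p u) (F.pos p v) := by
  rcases hp.orient ha.ne with h | h
  · exact hp.VE_aux ha hu hv h
  · rw [segment_symm]
    exact hp.VE_aux ha.symm hv hu h

/-- Two non-horizontal edges, the first one to the left of the second one. -/
lemma Good.EE_aux1 (hp : F.Good p) {u v x z : V} (ha : G.Adj u v) (hb : G.Adj x z)
    (hne : s(u, v) ≠ s(x, z)) (huv : F.y u < F.y v) (hxz : F.y x < F.y z)
    (hlt : F.px u v < F.px x z) {P : Pt}
    (hP : P ∈ segment ℝ (F.pos p u) (F.pos p v)) (hQ : P ∈ segment ℝ (F.pos p x) (F.pos p z))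
    (hu : (F.y u : ℝ) < P.2) (hv : P.2 < F.y v) (hx : (F.y x : ℝ) < P.2) (hz : P.2 < F.y z) :
    False := by
  obtain ⟨-, -, e1⟩ := F.seg_ln p huv hP
  obtain ⟨-, -, e2⟩ := F.seg_ln p hxz hQ
  have p1 := F.hpx u v ha
  have p2 := F.hpx v u ha.symm
  have p3 := F.hpx x z hb
  have p4 := F.hpx z x hb.symm
  have s1 := F.hsym u v ha huv.ne
  have s2 := F.hsym x z hb hxz.ne
  have huz : F.y u < F.y z := by exact_mod_cast hu.trans hz
  have hxv : F.y x < F.y v := by exact_mod_cast hx.trans hv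
  -- bottom
  have hbot : ∃ a : ℝ, a < P.2 ∧ F.ln p u v a ≤ F.ln p x z a ∧
      (F.ln p u v a = F.ln p x z a → u = x) := by
    rcases lt_trichotomy (F.y u) (F.y x) with h | h | h
    · refine ⟨F.y x, hx, ?_⟩
      rw [F.ln_left p hxz]
      have := hp.ev u v x ha h hxv (by
        rcases F.h2 u v x ha h hxv with h' | h' <;> omega)
      exact ⟨this.le, fun h => absurd h this.ne⟩
    · refine ⟨F.y u, hu, ?_⟩
      rw [F.ln_left p huv, h, F.ln_left p hxz]
      by_cases hc : u = x
      · subst hc; exact ⟨le_rfl, fun _ => rfl⟩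
      · have : p u < p x := hp.vv u x h (by rcases F.h1 u x hc h with h' | h' <;> omega)
        have : (p u : ℝ) < p x := by exact_mod_cast this
        exact ⟨this.le, fun h => absurd h this.ne⟩
    · refine ⟨F.y u, hu, ?_⟩
      rw [F.ln_left p huv]
      have := hp.ve x z u hb h huz (by
        rcases F.h2 x z u hb h huz with h' | h' <;> omega)
      exact ⟨this.le, fun h => absurd h this.ne⟩
  have htop : ∃ b : ℝ, P.2 < b ∧ F.ln p u v b ≤ F.ln p x z b ∧
      (F.ln p u v b = F.ln p x z b → v = z) := by
    rcases lt_trichotomy (F.y v) (F.y z) with h | h | h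
    · refine ⟨F.y v, hv, ?_⟩
      rw [F.ln_right p huv]
      have := hp.ve x z v hb hxv h (by
        rcases F.h2 x z v hb hxv h with h' | h' <;> omega)
      exact ⟨this.le, fun h => absurd h this.ne⟩
    · refine ⟨F.y v, hv, ?_⟩
      rw [F.ln_right p huv, h, F.ln_right p hxz]
      by_cases hc : v = z
      · subst hc; exact ⟨le_rfl, fun _ => rfl⟩
      · have : p v < p z := hp.vv v z h (by rcases F.h1 v z hc h with h' | h' <;> omega)
        have : (p v : ℝ) < p z := by exact_mod_cast this
        exact ⟨this.le, fun h => absurd h this.ne⟩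
    · refine ⟨F.y z, hz, ?_⟩
      rw [F.ln_right p hxz]
      have := hp.ev u v z ha huz h (by
        rcases F.h2 u v z ha huz h with h' | h' <;> omega)
      exact ⟨this.le, fun h => absurd h this.ne⟩
  obtain ⟨a, ha1, ha2, ha3⟩ := hbot
  obtain ⟨b, hb1, hb2, hb3⟩ := htop
  obtain ⟨c, d, hl⟩ := F.ln_affine p huv
  obtain ⟨c', d', hl'⟩ := F.ln_affine p hxz
  rw [hl] at ha2 hb2 ha3 hb3 e1
  rw [hl'] at ha2 hb2 ha3 hb3 e2
  have e3 : (c' - c) + (d' - d) * P.2 = 0 := by linarith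
  have e4 : 0 ≤ (d' - d) * (b - P.2) := by linarith
  have e5 : 0 ≤ (d' - d) * (a - P.2) := by linarith
  have e6 : d' - d = 0 := by
    apply le_antisymm
    · by_contra hc
      push Not at hc
      nlinarith
    · by_contra hc
      push Not at hc
      nlinarith
  rw [e6] at e3
  have e7 : d' = d := by linarith
  have e8 : c' = c := by linarith
  exact hne (by rw [ha3 (by rw [e7, e8]), hb3 (by rw [e7, e8])])

lemma Good.EE_aux2 (hp : F.Good p) {u v x z : V} (ha : G.Adj u v) (hb : G.Adj x z)
    (hne : s(u, v) ≠ s(x, z)) (huv : F.y u < F.y v) (hxz : F.y x < F.y z) {P : Pt}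
    (hP : P ∈ segment ℝ (F.pos p u) (F.pos p v)) (hQ : P ∈ segment ℝ (F.pos p x) (F.pos p z))
    (hu : (F.y u : ℝ) < P.2) (hv : P.2 < F.y v) (hx : (F.y x : ℝ) < P.2) (hz : P.2 < F.y z) :
    False := by
  have huz : F.y u < F.y z := by exact_mod_cast hu.trans hz
  have hxv : F.y x < F.y v := by exact_mod_cast hx.trans hv
  rcases lt_or_gt_of_ne (F.h3 u v x z ha hb hne huv hxz huz hxv) with h | h
  · exact hp.EE_aux1 ha hb hne huv hxz h hP hQ hu hv hx hz
  · exact hp.EE_aux1 hb ha hne.symm hxz huv h hQ hP hx hz hu hv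

lemma Good.EE_aux3 (hp : F.Good p) {u v x z : V} (ha : G.Adj u v) (hb : G.Adj x z)
    (huv : F.y u = F.y v) (huv' : p u < p v) (hxz : F.y x < F.y z) {P : Pt}
    (hP : P ∈ segment ℝ (F.pos p u) (F.pos p v)) (hQ : P ∈ segment ℝ (F.pos p x) (F.pos p z))
    (hx : (F.y x : ℝ) < P.2) (hz : P.2 < F.y z) : False := by
  obtain ⟨h1, h2, h3⟩ := F.seg_hor p huv huv'.le hP
  obtain ⟨-, -, e2⟩ := F.seg_ln p hxz hQ
  rw [h1] at hx hz e2
  have hx' : F.y x < F.y u := by exact_mod_cast hx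
  have hz' : F.y u < F.y z := by exact_mod_cast hz
  refine F.h5 u v x z ha hb huv hx' hz' ⟨?_, ?_⟩
  · rcases F.h2 x z u hb hx' hz' with h | h
    · have := hp.ev x z u hb hx' hz' h
      linarith
    · exact h
  · rcases F.h2 x z v hb (huv ▸ hx') (huv ▸ hz') with h | h
    · exact h
    · have := hp.ve x z v hb (huv ▸ hx') (huv ▸ hz') h
      rw [← huv] at this
      linarith

lemma seg_hor_mem (F : FVR G) (p : V → ℤ) {u v w : V} (h : F.y u = F.y v) (h' : F.y w = F.y u)
    (h1 : p u ≤ p w) (h2 : p w ≤ p v) (h3 : p u < p v) :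
    F.pos p w ∈ segment ℝ (F.pos p u) (F.pos p v) := by
  have h1' : (p u : ℝ) ≤ p w := by exact_mod_cast h1
  have h2' : (p w : ℝ) ≤ p v := by exact_mod_cast h2
  have h3' : (p u : ℝ) < p v := by exact_mod_cast h3
  have hd : (p v : ℝ) - p u ≠ 0 := by linarith
  rw [segment_eq_image]
  refine ⟨((p w : ℝ) - p u) / ((p v : ℝ) - p u), ⟨div_nonneg (by linarith) (by linarith),
    (div_le_one (by linarith)).2 (by linarith)⟩, ?_⟩
  simp only [pos, h', ← h]
  ext
  · simp
    field_simp
    ring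
  · simp
    ring

lemma Good.EE_aux4 (hp : F.Good p) {u v x z : V} (ha : G.Adj u v) (hb : G.Adj x z)
    (hne : s(u, v) ≠ s(x, z)) (huv : F.y u = F.y v) (huv' : p u < p v) (hxz : F.y x = F.y z)
    (hxz' : p x < p z) {P : Pt}
    (hP : P ∈ segment ℝ (F.pos p u) (F.pos p v)) (hQ : P ∈ segment ℝ (F.pos p x) (F.pos p z))
    (hu : P ≠ F.pos p u) (hv : P ≠ F.pos p v) (hx : P ≠ F.pos p x) (hz : P ≠ F.pos p z) :
    False := by
  obtain ⟨h1, h2, h3⟩ := F.seg_hor p huv huv'.le hP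
  obtain ⟨k1, k2, k3⟩ := F.seg_hor p hxz hxz'.le hQ
  have hy : F.y x = F.y u := by
    have : (F.y x : ℝ) = F.y u := k1.symm.trans h1
    exact_mod_cast this
  have hu' : (p u : ℝ) < P.1 := lt_of_le_of_ne h2 fun h => hu (Prod.ext h.symm h1)
  have hv' : P.1 < p v := lt_of_le_of_ne h3 fun h => hv (Prod.ext h (by rw [h1, huv]; rfl))
  have hx' : (p x : ℝ) < P.1 := lt_of_le_of_ne k2 fun h => hx (Prod.ext h.symm k1)
  have hz' : P.1 < p z := lt_of_le_of_ne k3 fun h => hz (Prod.ext h (by rw [k1, hxz]; rfl))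
  have i1 : p u < p z := by exact_mod_cast hu'.trans hz'
  have i2 : p x < p v := by exact_mod_cast hx'.trans hv'
  have j1 : u = x := by
    by_contra hc
    rcases lt_trichotomy (p u) (p x) with h | h | h
    · exact hp.VE ha (Ne.symm hc) (by rintro rfl; omega)
        (F.seg_hor_mem p huv hy h.le i2.le huv')
    · exact hc (hp.inj hy.symm h)
    · exact hp.VE hb hc (by rintro rfl; omega)
        (F.seg_hor_mem p hxz hy.symm h.le i1.le hxz')
  have hy' : F.y v = F.y z := by omega
  have j2 : v = z := by
    by_contra hc
    rcases lt_trichotomy (p v) (p z) with h | h | h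
    · exact hp.VE hb (by rintro rfl; omega) hc
        (F.seg_hor_mem p hxz (by omega) i2.le h.le hxz')
    · exact hc (hp.inj hy' h)
    · exact hp.VE ha (by rintro rfl; omega) (Ne.symm hc)
        (F.seg_hor_mem p huv (by omega) i1.le h.le huv')
  exact hne (by rw [j1, j2])

lemma Good.strict (F : FVR G) (p : V → ℤ) {u v : V} (h : F.y u < F.y v) {P : Pt}
    (hP : P ∈ segment ℝ (F.pos p u) (F.pos p v)) (hu : P ≠ F.pos p u) (hv : P ≠ F.pos p v) :
    (F.y u : ℝ) < P.2 ∧ P.2 < F.y v := by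
  obtain ⟨h1, h2, h3⟩ := F.seg_ln p h hP
  refine ⟨lt_of_le_of_ne h1 fun h' => hu (Prod.ext ?_ h'.symm),
    lt_of_le_of_ne h2 fun h' => hv (Prod.ext ?_ h')⟩
  · rw [h3, ← h', F.ln_left p h]; rfl
  · rw [h3, h', F.ln_right p h]; rfl

lemma Good.EE_aux (hp : F.Good p) {u v x z : V} (ha : G.Adj u v) (hb : G.Adj x z)
    (hne : s(u, v) ≠ s(x, z))
    (huv : F.y u < F.y v ∨ F.y u = F.y v ∧ p u < p v)
    (hxz : F.y x < F.y z ∨ F.y x = F.y z ∧ p x < p z) {P : Pt}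
    (hP : P ∈ segment ℝ (F.pos p u) (F.pos p v)) (hQ : P ∈ segment ℝ (F.pos p x) (F.pos p z))
    (hu : P ≠ F.pos p u) (hv : P ≠ F.pos p v) (hx : P ≠ F.pos p x) (hz : P ≠ F.pos p z) :
    False := by
  rcases huv with h | ⟨h, h'⟩
  · obtain ⟨a1, a2⟩ := Good.strict F p h hP hu hv
    rcases hxz with k | ⟨k, k'⟩
    · obtain ⟨b1, b2⟩ := Good.strict F p k hQ hx hz
      exact hp.EE_aux2 ha hb hne h k hP hQ a1 a2 b1 b2
    · exact hp.EE_aux3 hb ha k k' h hQ hP a1 a2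
  · rcases hxz with k | ⟨k, k'⟩
    · obtain ⟨b1, b2⟩ := Good.strict F p k hQ hx hz
      exact hp.EE_aux3 ha hb h h' k hP hQ b1 b2
    · exact hp.EE_aux4 ha hb hne h h' k k' hP hQ hu hv hx hz

theorem Good.EE (hp : F.Good p) {u v x z : V} (ha : G.Adj u v) (hb : G.Adj x z)
    (hne : s(u, v) ≠ s(x, z)) :
    segment ℝ (F.pos p u) (F.pos p v) ∩ segment ℝ (F.pos p x) (F.pos p z) ⊆
      F.pos p '' (({u, v} : Set V) ∩ ({x, z} : Set V)) := by
  rintro P ⟨hP, hQ⟩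
  have c1 : ∀ c, c = u ∨ c = v → P = F.pos p c →
      P ∈ F.pos p '' (({u, v} : Set V) ∩ ({x, z} : Set V)) := by
    rintro c hc rfl
    refine ⟨c, ⟨by simpa using hc, ?_⟩, rfl⟩
    by_contra hn
    simp only [mem_insert_iff, mem_singleton_iff, not_or] at hn
    exact hp.VE hb hn.1 hn.2 hQ
  have c2 : ∀ c, c = x ∨ c = z → P = F.pos p c →
      P ∈ F.pos p '' (({u, v} : Set V) ∩ ({x, z} : Set V)) := by
    rintro c hc rfl
    refine ⟨c, ⟨?_, by simpa using hc⟩, rfl⟩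
    by_contra hn
    simp only [mem_insert_iff, mem_singleton_iff, not_or] at hn
    exact hp.VE ha hn.1 hn.2 hP
  by_contra hn
  have hu : P ≠ F.pos p u := fun h => hn (c1 u (Or.inl rfl) h)
  have hv : P ≠ F.pos p v := fun h => hn (c1 v (Or.inr rfl) h)
  have hx : P ≠ F.pos p x := fun h => hn (c2 x (Or.inl rfl) h)
  have hz : P ≠ F.pos p z := fun h => hn (c2 z (Or.inr rfl) h)
  have hP' := segment_symm ℝ (F.pos p u) (F.pos p v) ▸ hP
  have hQ' := segment_symm ℝ (F.pos p x) (F.pos p z) ▸ hQ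
  rcases hp.orient ha.ne with o1 | o1 <;> rcases hp.orient hb.ne with o2 | o2
  · exact hp.EE_aux ha hb hne o1 o2 hP hQ hu hv hx hz
  · exact hp.EE_aux ha hb.symm (by rwa [Sym2.eq_swap (a := z)]) o1 o2 hP hQ' hu hv hz hx
  · exact hp.EE_aux ha.symm hb (by rwa [Sym2.eq_swap (a := v)]) o1 o2 hP' hQ hv hu hx hz
  · exact hp.EE_aux ha.symm hb.symm (by rwa [Sym2.eq_swap (a := z), Sym2.eq_swap (a := v)])
      o1 o2 hP' hQ' hv hu hz hx

end FVR


lemma chainSet_pair (p q : Pt) : chainSet [p, q] = segment ℝ p q := by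
  simp [chainSet, chainSegs]

lemma isSimpleChain_pair {p q : Pt} (h : p ≠ q) : IsSimpleChain [p, q] := by
  refine ⟨by simp, by simp [h], ?_⟩
  intro i j hij hi hj
  simp [chainSegs] at hi hj
  omega

lemma genuineBends_pair (p q : Pt) : GenuineBends [p, q] := by
  intro i h
  simp at h

/-- From a flat visibility representation to integer data. -/
theorem orth_to_FVR {V : Type} {G : SimpleGraph V} (D : OrthDrawing G) (hpl : D.IsPlanar)
    (hflat : D.IsFlat) (hvr : D.IsVR) (hIntC : D.IntCoords) :
    ∃ F : FVR G, ∀ v, (F.y v : ℝ) = (D.box v).y1 := by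
  obtain ⟨hdisj, hsimp, hatt, hbox, hcross⟩ := hpl
  have hll : ∀ v, IsIntPt ((D.box v).x1, (D.box v).y1) := fun v =>
    hIntC _ (Or.inl (mem_iUnion.2 ⟨v, by simp⟩))
  have hrr : ∀ v, IsIntPt ((D.box v).x2, (D.box v).y1) := fun v =>
    hIntC _ (Or.inl (mem_iUnion.2 ⟨v, by simp⟩))
  choose l hl using fun v => (hll v).1
  choose r hr using fun v => (hrr v).1
  choose y hy using fun v => (hll v).2
  simp only at hl hr hy
  have hmem : ∀ v (P : Pt), P ∈ (D.box v).pts ↔ (l v : ℝ) ≤ P.1 ∧ P.1 ≤ r v ∧ P.2 = y v := by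
    intro v P
    simp only [Box.pts, mem_prod, mem_Icc, ← hflat v, hl, hr, hy]
    constructor
    · rintro ⟨⟨a, b⟩, c, d⟩
      exact ⟨a, b, le_antisymm d c⟩
    · rintro ⟨a, b, c⟩
      exact ⟨⟨a, b⟩, c.ge, c.le⟩
  -- attachment points
  have hch : ∀ u v, ∃ k : ℤ, G.Adj u v → (D.chain u v).head? = some ((k : ℝ), (y u : ℝ)) ∧
      l u ≤ k ∧ k ≤ r u := by
    intro u v
    by_cases ha : G.Adj u v
    · obtain ⟨p, q, m, hc, hp, hq⟩ := hatt u v ha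
      obtain ⟨⟨k, hk⟩, -⟩ := hIntC p (Or.inr (by
        simp only [mem_iUnion]
        exact ⟨u, v, ha, by
          show p ∈ D.chain u v
          rw [hc]; simp⟩))
      rw [hmem] at hp
      refine ⟨k, fun _ => ⟨?_, ?_, ?_⟩⟩
      · rw [hc, ← hk, ← hp.2.2]; rfl
      · have := hp.1
        rw [hk] at this
        exact_mod_cast this
      · have := hp.2.1
        rw [hk] at this
        exact_mod_cast this
    · exact ⟨0, fun h => absurd h ha⟩
  choose px hpx using hch
  have hchain : ∀ u v, G.Adj u v →
      D.chain u v = [((px u v : ℝ), (y u : ℝ)), ((px v u : ℝ), (y v : ℝ))] := by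
    intro u v ha
    have h1 := (hpx u v ha).1
    have h2 := (hpx v u ha.symm).1
    rw [D.chain_symm u v] at h2
    have h3 := hvr u v ha
    rw [List.length_eq_two] at h3
    obtain ⟨p, q, hpq⟩ := h3
    rw [hpq] at h1 h2 ⊢
    simp only [List.head?_cons, Option.some.injEq, List.reverse_cons, List.reverse_nil,
      List.nil_append, List.cons_append] at h1 h2
    rw [h1, h2]
  have hcurve : ∀ u v, G.Adj u v → D.curve u v =
      segment ℝ ((px u v : ℝ), (y u : ℝ)) ((px v u : ℝ), (y v : ℝ)) := by
    intro u v ha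
    rw [OrthDrawing.curve, hchain u v ha, chainSet_pair]
  have hsym : ∀ u v, G.Adj u v → y u ≠ y v → px u v = px v u := by
    intro u v ha hne
    have h1 := (hsimp u v ha).2.1
    rw [hchain u v ha] at h1
    have h2 := h1 (((px u v : ℝ), (y u : ℝ)), ((px v u : ℝ), (y v : ℝ))) (by simp [chainSegs])
    simp only [Int.cast_inj] at h2
    exact h2.resolve_right hne
  have hlr : ∀ v, l v ≤ r v := by
    intro v
    have := (D.box v).hx
    rw [hl, hr] at this
    exact_mod_cast this
  -- points on vertical and horizontal edges
  have hvert : ∀ u v, G.Adj u v → y u < y v → ∀ t : ℝ, (y u : ℝ) ≤ t → t ≤ y v →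
      ((px u v : ℝ), t) ∈ D.curve u v := by
    intro u v ha hlt t h1 h2
    rw [hcurve u v ha, ← hsym u v ha hlt.ne]
    have : ((px u v : ℝ), t) ∈ (fun b : ℝ => ((px u v : ℝ), b)) '' segment ℝ (y u : ℝ) (y v) :=
      ⟨t, by rw [segment_eq_Icc (h1.trans h2)]; exact ⟨h1, h2⟩, rfl⟩
    rwa [Prod.image_mk_segment_right] at this
  have hhor : ∀ u v, G.Adj u v → y u = y v → r u < l v → ∀ t : ℤ, r u < t → t < l v →
      ((t : ℝ), (y u : ℝ)) ∈ D.curve u v := by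
    intro u v ha hyy hlt t h1 h2
    rw [hcurve u v ha, ← hyy]
    have a1 := (hpx u v ha).2.2
    have a2 := (hpx v u ha.symm).2.1
    have b1 : (px u v : ℝ) ≤ t := by exact_mod_cast a1.trans h1.le
    have b2 : (t : ℝ) ≤ px v u := by exact_mod_cast h2.le.trans a2
    have : ((t : ℝ), (y u : ℝ)) ∈ (fun b : ℝ => (b, (y u : ℝ))) ''
        segment ℝ (px u v : ℝ) (px v u) :=
      ⟨t, by rw [segment_eq_Icc (b1.trans b2)]; exact ⟨b1, b2⟩, rfl⟩
    rwa [Prod.image_mk_segment_left] at this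
  have hends : ∀ u v, G.Adj u v → ∀ P : Pt, ((D.chain u v).head? = some P ∨
      (D.chain u v).getLast? = some P) → P.2 = y u ∨ P.2 = y v := by
    intro u v ha P h
    rw [hchain u v ha] at h
    rcases h with h | h
    · left
      simp only [List.head?_cons, Option.some.injEq] at h
      rw [← h]
    · right
      simp at h
      rw [← h]
  refine ⟨⟨y, l, r, px, hlr, fun u v ha => (hpx u v ha).2, hsym, ?_, ?_, ?_, ?_, ?_⟩,
    fun v => (hy v).symm⟩
  · intro u v hne hyy
    by_contra hc
    push Not at hc
    have h1 : (((max (l u) (l v) : ℤ) : ℝ), (y u : ℝ)) ∈ (D.box u).pts := by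
      rw [hmem]
      have := hlr u
      refine ⟨?_, ?_, rfl⟩
      · exact Int.cast_le.2 (le_max_left _ _)
      · exact Int.cast_le.2 (max_le this hc.1)
    have h2 : (((max (l u) (l v) : ℤ) : ℝ), (y u : ℝ)) ∈ (D.box v).pts := by
      rw [hmem]
      have := hlr v
      refine ⟨?_, ?_, by simp [hyy]⟩
      · exact Int.cast_le.2 (le_max_right _ _)
      · exact Int.cast_le.2 (max_le hc.2 this)
    exact Set.disjoint_left.1 (hdisj u v hne) h1 h2
  · intro u v w ha h1 h2
    by_contra hc
    push Not at hc
    have h3 := hvert u v ha (h1.trans h2) (y w) (by exact_mod_cast h1.le) (by exact_mod_cast h2.le)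
    have h4 : ((px u v : ℝ), (y w : ℝ)) ∈ (D.box w).pts := by
      rw [hmem]
      exact ⟨Int.cast_le.2 hc.1, Int.cast_le.2 hc.2, rfl⟩
    rcases hbox u v w ha ⟨h3, h4⟩ with ⟨h5, -⟩ | ⟨h5, -⟩
    · rw [h5] at h1; exact lt_irrefl _ h1
    · rw [h5] at h2; exact lt_irrefl _ h2
  · intro u v x z ha hb hne huv hxz huz hxv heq
    have huv' : (y u : ℝ) < y v := by exact_mod_cast huv
    have hxz' : (y x : ℝ) < y z := by exact_mod_cast hxz
    have huz' : (y u : ℝ) < y z := by exact_mod_cast huz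
    have hxv' : (y x : ℝ) < y v := by exact_mod_cast hxv
    obtain ⟨t, ht1, ht2⟩ : ∃ t : ℝ, max (y u : ℝ) (y x) < t ∧ t < min (y v : ℝ) (y z) :=
      exists_between (by simp [*])
    rw [max_lt_iff] at ht1
    rw [lt_min_iff] at ht2
    have h1 := hvert u v ha huv t ht1.1.le ht2.1.le
    have h2 := hvert x z hb hxz t ht1.2.le ht2.2.le
    rw [← heq] at h2
    rcases hends u v ha _ (hcross u v x z ha hb hne ⟨h1, h2⟩).1 with h | h
    · exact ht1.1.ne' h
    · exact ht2.1.ne h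
  · rintro u v w ha hyy hyw ⟨h1, h2⟩
    have hw := hlr w
    have hu := hlr u
    have hv := hlr v
    have h3 := hhor u v ha hyy (by omega) (l w) h1 (by omega)
    have h4 : ((l w : ℝ), (y u : ℝ)) ∈ (D.box w).pts := by
      rw [hmem]
      exact ⟨le_rfl, Int.cast_le.2 hw, by simp [hyw]⟩
    rcases hbox u v w ha ⟨h3, h4⟩ with ⟨h5, -⟩ | ⟨h5, -⟩
    · subst h5; omega
    · subst h5; omega
  · rintro u v x z ha hb hyy hx hz ⟨h1, h2⟩
    have h3 := hhor u v ha hyy (by omega) _ h1 h2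
    have h4 := hvert x z hb (hx.trans hz) (y u) (by exact_mod_cast hx.le) (by exact_mod_cast hz.le)
    have hne : s(u, v) ≠ s(x, z) := by
      intro h
      rw [Sym2.eq_iff] at h
      rcases h with ⟨rfl, rfl⟩ | ⟨rfl, rfl⟩ <;> omega
    rcases hends x z hb _ (hcross u v x z ha hb hne ⟨h3, h4⟩).2 with h | h
    · have : y u = y x := Int.cast_inj.1 h
      omega
    · have : y u = y z := Int.cast_inj.1 h
      omega

theorem flatVR_to_straightLine {V : Type} [Fintype V] {G : SimpleGraph V} {h : ℕ}
    (D : OrthDrawing G) (hpl : D.IsPlanar)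
    (hflat : D.IsFlat) (hvr : D.IsVR) (hIntC : D.IntCoords) (hh : D.InHeight h) :
    ∃ D : PolylineDrawing G, D.IsStraightLine ∧ D.IsPlanar ∧ D.IntCoords ∧ D.InHeight h := by
  obtain ⟨F, hF⟩ := orth_to_FVR D hpl hflat hvr hIntC
  obtain ⟨p, hp⟩ := F.exists_good
  obtain ⟨y0, hy0⟩ := hh
  have hpts : ∀ q ∈ (⟨F.pos p, fun _ _ => [], fun _ _ => rfl⟩ : PolylineDrawing G).points,
      ∃ v, q = F.pos p v := by
    rintro q (⟨v, rfl⟩ | h)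
    · exact ⟨v, rfl⟩
    · simp at h
  refine ⟨⟨F.pos p, fun _ _ => [], fun _ _ => rfl⟩, fun _ _ => rfl, ⟨hp.pos_inj, ?_, ?_, ?_⟩,
    ?_, ⟨y0, ?_⟩⟩
  · intro u v ha
    exact ⟨isSimpleChain_pair fun h => ha.ne (hp.pos_inj h), genuineBends_pair _ _⟩
  · intro u v w ha hu hv
    simp only [PolylineDrawing.curve, PolylineDrawing.chain, List.nil_append, chainSet_pair]
    exact hp.VE ha hu hv
  · intro u v x z ha hb hne
    simp only [PolylineDrawing.curve, PolylineDrawing.chain, List.nil_append, chainSet_pair]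
    exact hp.EE ha hb hne
  · intro q hq
    obtain ⟨v, rfl⟩ := hpts q hq
    exact ⟨⟨p v, rfl⟩, ⟨F.y v, rfl⟩⟩
  · intro q hq
    obtain ⟨v, rfl⟩ := hpts q hq
    have := hy0 ((D.box v).x1, (D.box v).y1) (Or.inl (mem_iUnion.2 ⟨v, by simp⟩))
    simp only [FVR.pos, hF]
    exact this


namespace FVR

variable {V : Type} {G : SimpleGraph V}

/-- Attachment point of edge `uv` at `u`. -/
def att (F : FVR G) (u v : V) : Pt := ((F.px u v : ℝ), (F.y u : ℝ))

/-- Horizontal edges run between the facing ends of the two segments. -/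
def Tight (F : FVR G) : Prop := ∀ u v, G.Adj u v → F.y u = F.y v → F.r u < F.l v →
  F.px u v = F.r u ∧ F.px v u = F.l v

lemma att_vert (F : FVR G) {u v : V} (ha : G.Adj u v) (h : F.y u < F.y v) {P : Pt}
    (hP : P ∈ segment ℝ (F.att u v) (F.att v u)) :
    P.1 = F.px u v ∧ (F.y u : ℝ) ≤ P.2 ∧ P.2 ≤ F.y v := by
  obtain ⟨t, h0, h1, e1, e2⟩ := mem_seg hP
  simp only [att] at e1 e2
  rw [F.hsym v u ha.symm h.ne'] at e1
  have hd : (F.y u : ℝ) < F.y v := by exact_mod_cast h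
  refine ⟨?_, ?_, ?_⟩
  · rw [e1]; ring
  · rw [e2]; nlinarith
  · rw [e2]; nlinarith

lemma att_hor (F : FVR G) (hT : F.Tight) {u v : V} (ha : G.Adj u v) (h : F.y u = F.y v)
    (h' : F.r u < F.l v) {P : Pt} (hP : P ∈ segment ℝ (F.att u v) (F.att v u)) :
    P.2 = F.y u ∧ (F.r u : ℝ) ≤ P.1 ∧ P.1 ≤ F.l v := by
  obtain ⟨t, h0, h1, e1, e2⟩ := mem_seg hP
  simp only [att] at e1 e2
  rw [(hT u v ha h h').1, (hT u v ha h h').2] at e1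
  have hd : (F.r u : ℝ) < F.l v := by exact_mod_cast h'
  refine ⟨?_, ?_, ?_⟩
  · rw [e2, h]; ring
  · rw [e1]; nlinarith
  · rw [e1]; nlinarith

/-- Orientation of an edge. -/
def Or (F : FVR G) (u v : V) : Prop := F.y u < F.y v ∨ F.y u = F.y v ∧ F.r u < F.l v

lemma or_or (F : FVR G) {u v : V} (h : u ≠ v) : F.Or u v ∨ F.Or v u := by
  rcases lt_trichotomy (F.y u) (F.y v) with h1 | h1 | h1
  · exact Or.inl (Or.inl h1)
  · rcases F.h1 u v h h1 with h2 | h2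
    · exact Or.inl (Or.inr ⟨h1, h2⟩)
    · exact Or.inr (Or.inr ⟨h1.symm, h2⟩)
  · exact Or.inr (Or.inl h1)

/-- The box of a vertex. -/
def bx (F : FVR G) (v : V) : Box where
  x1 := F.l v
  x2 := F.r v
  y1 := F.y v
  y2 := F.y v
  hx := by exact_mod_cast F.hlr v
  hy := le_rfl

lemma mem_bx (F : FVR G) {v : V} {P : Pt} :
    P ∈ (F.bx v).pts ↔ (F.l v : ℝ) ≤ P.1 ∧ P.1 ≤ F.r v ∧ P.2 = F.y v := by
  simp only [Box.pts, mem_prod, mem_Icc, bx]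
  constructor
  · rintro ⟨⟨a, b⟩, c, d⟩
    exact ⟨a, b, le_antisymm d c⟩
  · rintro ⟨a, b, c⟩
    exact ⟨⟨a, b⟩, c.ge, c.le⟩

lemma att_mem (F : FVR G) {u v : V} (ha : G.Adj u v) : F.att u v ∈ (F.bx u).pts := by
  rw [mem_bx]
  have := F.hpx u v ha
  exact ⟨Int.cast_le.2 this.1, Int.cast_le.2 this.2, rfl⟩

lemma bx_disj (F : FVR G) {u v : V} {P : Pt} (hu : P ∈ (F.bx u).pts) (hv : P ∈ (F.bx v).pts) :
    u = v := by
  rw [mem_bx] at hu hv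
  by_contra hne
  have hy : F.y u = F.y v := by
    have := hu.2.2.symm.trans hv.2.2
    exact_mod_cast this
  rcases F.h1 u v hne hy with h | h
  · have : (F.r u : ℝ) < F.l v := by exact_mod_cast h
    linarith
  · have : (F.r v : ℝ) < F.l u := by exact_mod_cast h
    linarith

lemma EB_aux (F : FVR G) (hT : F.Tight) {u v w : V} (ha : G.Adj u v) (ho : F.Or u v) {P : Pt}
    (hP : P ∈ segment ℝ (F.att u v) (F.att v u)) (hw : P ∈ (F.bx w).pts) :
    (w = u ∧ F.att u v = P) ∨ (w = v ∧ F.att v u = P) := by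
  have hw' := F.mem_bx.1 hw
  rcases ho with ho | ⟨ho, ho'⟩
  · obtain ⟨h1, h2, h3⟩ := F.att_vert ha ho hP
    rw [hw'.2.2] at h2 h3
    have h2' : F.y u ≤ F.y w := by exact_mod_cast h2
    have h3' : F.y w ≤ F.y v := by exact_mod_cast h3
    rcases h2'.eq_or_lt with h4 | h4
    · left
      have h5 : F.att u v = P := Prod.ext h1.symm (by rw [hw'.2.2, ← h4]; rfl)
      exact ⟨F.bx_disj hw (h5 ▸ F.att_mem ha), h5⟩
    rcases h3'.eq_or_lt with h5 | h5
    · right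
      have h5 : F.att v u = P := Prod.ext
        (by rw [h1, F.hsym u v ha ho.ne]; rfl) (by rw [hw'.2.2, h5]; rfl)
      exact ⟨F.bx_disj hw (h5 ▸ F.att_mem ha.symm), h5⟩
    exfalso
    rw [h1] at hw'
    have a1 : F.l w ≤ F.px u v := by exact_mod_cast hw'.1
    have a2 : F.px u v ≤ F.r w := by exact_mod_cast hw'.2.1
    rcases F.h2 u v w ha h4 h5 with h | h <;> omega
  · obtain ⟨h1, h2, h3⟩ := F.att_hor hT ha ho ho' hP
    have hy : F.y w = F.y u := by
      have := hw'.2.2.symm.trans h1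
      exact_mod_cast this
    by_cases c1 : w = u
    · left
      subst c1
      refine ⟨rfl, Prod.ext ?_ h1.symm⟩
      simp only [att]
      rw [(hT _ _ ha ho ho').1]
      linarith [hw'.2.1]
    by_cases c2 : w = v
    · right
      subst c2
      refine ⟨rfl, Prod.ext ?_ hw'.2.2.symm⟩
      simp only [att]
      rw [(hT _ _ ha ho ho').2]
      linarith [hw'.1]
    exfalso
    have a1 : F.r u ≤ F.r w := by exact_mod_cast h2.trans hw'.2.1
    have a2 : F.l w ≤ F.l v := by exact_mod_cast hw'.1.trans h3
    have b1 := F.hlr u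
    have b2 := F.hlr v
    refine F.h4 u v w ha ho hy ⟨?_, ?_⟩
    · rcases F.h1 w u c1 hy with h | h <;> omega
    · rcases F.h1 w v c2 (hy.trans ho) with h | h <;> omega

/-- `P` is an end of the edge `uv`. -/
def End (F : FVR G) (u v : V) (P : Pt) : Prop := F.att u v = P ∨ F.att v u = P

lemma EB_end (F : FVR G) (hT : F.Tight) {u v w : V} (ha : G.Adj u v) (ho : F.Or u v) {P : Pt}
    (hP : P ∈ segment ℝ (F.att u v) (F.att v u)) (hw : P ∈ (F.bx w).pts) : F.End u v P := by
  rcases F.EB_aux hT ha ho hP hw with h | h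
  · exact Or.inl h.2
  · exact Or.inr h.2

lemma End.box {F : FVR G} {u v : V} (ha : G.Adj u v) {P : Pt} (h : F.End u v P) :
    ∃ w, P ∈ (F.bx w).pts := by
  rcases h with rfl | rfl
  · exact ⟨_, F.att_mem ha⟩
  · exact ⟨_, F.att_mem ha.symm⟩

lemma EE_aux_vv (F : FVR G) {u v x z : V} (ha : G.Adj u v) (hb : G.Adj x z)
    (hne : s(u, v) ≠ s(x, z)) (huv : F.y u < F.y v) (hxz : F.y x < F.y z) {P : Pt}
    (hP : P ∈ segment ℝ (F.att u v) (F.att v u)) (hQ : P ∈ segment ℝ (F.att x z) (F.att z x)) :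
    F.End u v P := by
  obtain ⟨h1, h2, h3⟩ := F.att_vert ha huv hP
  obtain ⟨k1, k2, k3⟩ := F.att_vert hb hxz hQ
  have heq : F.px u v = F.px x z := by
    have := h1.symm.trans k1
    exact_mod_cast this
  by_cases c1 : F.y u < F.y z
  · by_cases c2 : F.y x < F.y v
    · exact absurd heq (F.h3 u v x z ha hb hne huv hxz c1 c2)
    · right
      refine Prod.ext (by rw [h1, F.hsym u v ha huv.ne]; rfl) ?_
      have : (F.y v : ℝ) ≤ F.y x := by exact_mod_cast not_lt.1 c2
      simp only [att]
      linarith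
  · left
    refine Prod.ext h1.symm ?_
    have : (F.y z : ℝ) ≤ F.y u := by exact_mod_cast not_lt.1 c1
    simp only [att]
    linarith

lemma EE_aux_hv (F : FVR G) (hT : F.Tight) {u v x z : V} (ha : G.Adj u v) (hb : G.Adj x z)
    (huv : F.y u = F.y v) (huv' : F.r u < F.l v) (hxz : F.y x < F.y z) {P : Pt}
    (hP : P ∈ segment ℝ (F.att u v) (F.att v u)) (hQ : P ∈ segment ℝ (F.att x z) (F.att z x)) :
    F.End x z P := by
  obtain ⟨h1, h2, h3⟩ := F.att_hor hT ha huv huv' hP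
  obtain ⟨k1, k2, k3⟩ := F.att_vert hb hxz hQ
  rw [h1] at k2 k3
  have k2' : F.y x ≤ F.y u := by exact_mod_cast k2
  have k3' : F.y u ≤ F.y z := by exact_mod_cast k3
  rcases k2'.eq_or_lt with h4 | h4
  · exact Or.inl (Prod.ext k1.symm (by rw [h1, ← h4]; rfl))
  rcases k3'.eq_or_lt with h5 | h5
  · exact Or.inr (Prod.ext (by rw [k1, F.hsym x z hb hxz.ne]; rfl) (by rw [h1, h5]; rfl))
  exfalso
  rw [k1] at h2 h3
  have h2' : F.r u ≤ F.px x z := by exact_mod_cast h2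
  have h3' : F.px x z ≤ F.l v := by exact_mod_cast h3
  have b1 := F.hlr u
  have b2 := F.hlr v
  refine F.h5 u v x z ha hb huv h4 h5 ⟨?_, ?_⟩
  · rcases F.h2 x z u hb h4 h5 with h | h <;> omega
  · rcases F.h2 x z v hb (huv ▸ h4) (huv ▸ h5) with h | h <;> omega

lemma EE_aux_hh (F : FVR G) (hT : F.Tight) {u v x z : V} (ha : G.Adj u v) (hb : G.Adj x z)
    (hne : s(u, v) ≠ s(x, z)) (huv : F.y u = F.y v) (huv' : F.r u < F.l v) (hxz : F.y x = F.y z)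
    (hxz' : F.r x < F.l z) {P : Pt}
    (hP : P ∈ segment ℝ (F.att u v) (F.att v u)) (hQ : P ∈ segment ℝ (F.att x z) (F.att z x)) :
    F.End u v P := by
  obtain ⟨h1, h2, h3⟩ := F.att_hor hT ha huv huv' hP
  obtain ⟨k1, k2, k3⟩ := F.att_hor hT hb hxz hxz' hQ
  have hy : F.y u = F.y x := by
    have := h1.symm.trans k1
    exact_mod_cast this
  have bu := F.hlr u
  have bv := F.hlr v
  have bx := F.hlr x
  have bz := F.hlr z
  have i1 : F.r u ≤ F.l z := by exact_mod_cast h2.trans k3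
  have i2 : F.r x ≤ F.l v := by exact_mod_cast k2.trans h3
  by_cases c1 : u = x
  · subst c1
    have c2 : v ≠ z := by
      rintro rfl
      exact hne rfl
    exfalso
    rcases F.h1 v z c2 (by omega) with h | h
    · exact F.h4 u z v hb hxz huv.symm ⟨huv', h⟩
    · exact F.h4 u v z ha huv hxz.symm ⟨hxz', h⟩
  · rcases F.h1 u x c1 hy with h | h
    · by_cases c2 : x = v
      · subst c2
        right
        refine Prod.ext ?_ k1.symm
        simp only [att]
        rw [(hT _ _ ha huv huv').2]
        have : (F.l x : ℝ) ≤ F.r x := by exact_mod_cast bx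
        linarith
      · exfalso
        rcases F.h1 x v c2 (by omega) with h' | h'
        · exact F.h4 u v x ha huv hy.symm ⟨h, h'⟩
        · omega
    · by_cases c2 : u = z
      · subst c2
        left
        refine Prod.ext ?_ h1.symm
        simp only [att]
        rw [(hT _ _ ha huv huv').1]
        have : (F.l u : ℝ) ≤ F.r u := by exact_mod_cast bu
        linarith
      · exfalso
        rcases F.h1 u z c2 (by omega) with h' | h'
        · exact F.h4 x z u hb hxz hy ⟨h, h'⟩
        · omega

lemma EE_or (F : FVR G) (hT : F.Tight) {u v x z : V} (ha : G.Adj u v) (hb : G.Adj x z)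
    (hne : s(u, v) ≠ s(x, z)) (huv : F.Or u v) (hxz : F.Or x z) {P : Pt}
    (hP : P ∈ segment ℝ (F.att u v) (F.att v u)) (hQ : P ∈ segment ℝ (F.att x z) (F.att z x)) :
    F.End u v P := by
  rcases id huv with h | ⟨h, h'⟩
  · rcases hxz with k | ⟨k, k'⟩
    · exact F.EE_aux_vv ha hb hne h k hP hQ
    · exact F.EE_aux_hv hT hb ha k k' h hQ hP
  · rcases hxz with k | ⟨k, k'⟩
    · obtain ⟨w, hw⟩ := (F.EE_aux_hv hT ha hb h h' k hP hQ).box hb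
      exact F.EB_end hT ha huv hP hw
    · exact F.EE_aux_hh hT ha hb hne h h' k k' hP hQ

lemma EE_all (F : FVR G) (hT : F.Tight) {u v x z : V} (ha : G.Adj u v) (hb : G.Adj x z)
    (hne : s(u, v) ≠ s(x, z)) {P : Pt}
    (hP : P ∈ segment ℝ (F.att u v) (F.att v u)) (hQ : P ∈ segment ℝ (F.att x z) (F.att z x)) :
    F.End u v P := by
  have hP' := segment_symm ℝ (F.att u v) (F.att v u) ▸ hP
  have hQ' := segment_symm ℝ (F.att x z) (F.att z x) ▸ hQ
  rcases F.or_or ha.ne with o1 | o1 <;> rcases F.or_or hb.ne with o2 | o2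
  · exact F.EE_or hT ha hb hne o1 o2 hP hQ
  · exact F.EE_or hT ha hb.symm (by rwa [Sym2.eq_swap (a := z)]) o1 o2 hP hQ'
  · exact (F.EE_or hT ha.symm hb (by rwa [Sym2.eq_swap (a := v)]) o1 o2 hP' hQ).symm
  · exact (F.EE_or hT ha.symm hb.symm (by rwa [Sym2.eq_swap (a := z), Sym2.eq_swap (a := v)])
      o1 o2 hP' hQ').symm

lemma EB (F : FVR G) (hT : F.Tight) {u v w : V} (ha : G.Adj u v) {P : Pt}
    (hP : P ∈ segment ℝ (F.att u v) (F.att v u)) (hw : P ∈ (F.bx w).pts) :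
    (w = u ∧ F.att u v = P) ∨ (w = v ∧ F.att v u = P) := by
  rcases F.or_or ha.ne with o1 | o1
  · exact F.EB_aux hT ha o1 hP hw
  · exact (F.EB_aux hT ha.symm o1 (segment_symm ℝ (F.att u v) (F.att v u) ▸ hP) hw).symm

open Classical in
/-- The orthogonal drawing. -/
noncomputable def drawing (F : FVR G) : OrthDrawing G where
  box := F.bx
  chain := fun u v => if G.Adj u v then [F.att u v, F.att v u] else []
  chain_symm := by
    intro u v
    by_cases h : G.Adj u v
    · simp [h, h.symm]
    · have h' : ¬ G.Adj v u := fun k => h k.symm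
      simp [h, h']

lemma drawing_chain (F : FVR G) {u v : V} (h : G.Adj u v) :
    F.drawing.chain u v = [F.att u v, F.att v u] := by
  simp [drawing, h]

lemma drawing_curve (F : FVR G) {u v : V} (h : G.Adj u v) :
    F.drawing.curve u v = segment ℝ (F.att u v) (F.att v u) := by
  rw [OrthDrawing.curve, F.drawing_chain h, chainSet_pair]

lemma att_ne (F : FVR G) {u v : V} (h : G.Adj u v) : F.att u v ≠ F.att v u := by
  intro he
  exact h.ne (F.bx_disj (F.att_mem h) (he ▸ F.att_mem h.symm))

theorem drawing_planar (F : FVR G) (hT : F.Tight) : F.drawing.IsPlanar := by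
  refine ⟨?_, ?_, ?_, ?_, ?_⟩
  · intro u v hne
    rw [Set.disjoint_left]
    intro P hP hQ
    exact hne (F.bx_disj hP hQ)
  · intro u v ha
    rw [F.drawing_chain ha]
    refine ⟨isSimpleChain_pair (F.att_ne ha), ?_, genuineBends_pair _ _⟩
    intro s hs
    simp [chainSegs] at hs
    subst hs
    by_cases hy : F.y u = F.y v
    · right; simp [att, hy]
    · left; simp [att, F.hsym u v ha hy]
  · intro u v ha
    exact ⟨F.att u v, F.att v u, [], F.drawing_chain ha, F.att_mem ha, F.att_mem ha.symm⟩
  · rintro u v w ha P ⟨hP, hw⟩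
    rw [F.drawing_curve ha] at hP
    simp only [mem_ofPred_eq, F.drawing_chain ha]
    simpa using F.EB hT ha hP hw
  · rintro u v x z ha hb hne P ⟨hP, hQ⟩
    rw [F.drawing_curve ha] at hP
    rw [F.drawing_curve hb] at hQ
    simp only [mem_ofPred_eq, F.drawing_chain ha, F.drawing_chain hb]
    have h1 := F.EE_all hT ha hb hne hP hQ
    have h2 := F.EE_all hT hb ha hne.symm hQ hP
    unfold End at h1 h2
    simpa using And.intro h1 h2

lemma drawing_points (F : FVR G) (q : Pt) (hq : q ∈ F.drawing.points) :
    ∃ (v : V) (k : ℤ), q = ((k : ℝ), (F.y v : ℝ)) := by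
  rcases hq with hq | hq
  · obtain ⟨v, hv⟩ := mem_iUnion.1 hq
    simp only [drawing, bx, mem_insert_iff, mem_singleton_iff] at hv
    rcases hv with h | h | h | h
    · exact ⟨v, F.l v, h⟩
    · exact ⟨v, F.l v, h⟩
    · exact ⟨v, F.r v, h⟩
    · exact ⟨v, F.r v, h⟩
  · simp only [mem_iUnion] at hq
    obtain ⟨u, v, ha, h⟩ := hq
    simp only [mem_ofPred_eq, F.drawing_chain ha] at h
    simp only [List.mem_cons, List.not_mem_nil, or_false] at h
    rcases h with h | h
    · exact ⟨u, F.px u v, h⟩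
    · exact ⟨v, F.px v u, h⟩

end FVR


/-- Sweep lemma: objects with interval spans whose left-right order never flips can be given
integer abscissae compatible with the left-right order. -/
theorem sweep {O K : Type} [Fintype O] [LinearOrder K] (lo hi : O → ℝ) (key : O → ℝ → K)
    (WC : ∀ a b t t', lo a ≤ t → t ≤ hi a → lo b ≤ t → t ≤ hi b → lo a ≤ t' → t' ≤ hi a →
      lo b ≤ t' → t' ≤ hi b → key a t < key b t → key a t' ≤ key b t') :
    ∃ f : O → ℤ, ∀ a b t, lo a ≤ t → t ≤ hi a → lo b ≤ t → t ≤ hi b → key a t < key b t →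
      f a < f b := by
  classical
  let L : O → O → Prop := fun a b => ∃ t, lo a ≤ t ∧ t ≤ hi a ∧ lo b ≤ t ∧ t ≤ hi b ∧
    key a t < key b t
  have main : ∀ s : Finset O, ∃ f : O → ℚ, ∀ a ∈ s, ∀ b ∈ s, L a b → f a < f b := by
    intro s
    induction s using Finset.induction_on_max_value lo with
    | empty => exact ⟨fun _ => 0, by simp⟩
    | insert o s ho hmax ih =>
      obtain ⟨f, hf⟩ := ih
      obtain ⟨m, hm1, hm2⟩ := Order.exists_between_finsets
        ((s.filter fun a => L a o).image f) ((s.filter fun b => L o b).image f) (by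
          intro p hp q hq
          simp only [Finset.mem_image, Finset.mem_filter] at hp hq
          obtain ⟨a, ⟨has, t1, a1, a2, a3, a4, a5⟩, rfl⟩ := hp
          obtain ⟨b, ⟨hbs, t2, b1, b2, b3, b4, b5⟩, rfl⟩ := hq
          apply hf a has b hbs
          have la := hmax a has
          have lb := hmax b hbs
          rcases le_total t1 t2 with h | h
          · exact ⟨t1, a1, a2, by linarith, by linarith, a5.trans_le
              (WC o b t2 t1 b1 b2 b3 b4 (by linarith) (by linarith) (by linarith) (by linarith) b5)⟩
          · exact ⟨t2, by linarith, by linarith, b3, b4, (WC a o t1 t2 a1 a2 a3 a4 (by linarith)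
              (by linarith) (by linarith) (by linarith) a5).trans_lt b5⟩)
      refine ⟨Function.update f o m, ?_⟩
      intro a ha b hb hab
      by_cases ca : a = o
      · by_cases cb : b = o
        · subst ca
          subst cb
          obtain ⟨t, -, -, -, -, h⟩ := hab
          exact absurd h (lt_irrefl _)
        · subst ca
          rw [Function.update_self, Function.update_of_ne cb]
          apply hm2
          simp only [Finset.mem_image, Finset.mem_filter]
          exact ⟨b, ⟨Finset.mem_of_mem_insert_of_ne hb cb, hab⟩, rfl⟩
      · by_cases cb : b = o
        · subst cb
          rw [Function.update_self, Function.update_of_ne ca]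
          apply hm1
          simp only [Finset.mem_image, Finset.mem_filter]
          exact ⟨a, ⟨Finset.mem_of_mem_insert_of_ne ha ca, hab⟩, rfl⟩
        · rw [Function.update_of_ne ca, Function.update_of_ne cb]
          exact hf a (Finset.mem_of_mem_insert_of_ne ha ca) b
            (Finset.mem_of_mem_insert_of_ne hb cb) hab
  obtain ⟨f, hf⟩ := main Finset.univ
  refine ⟨fun a => ((Finset.univ.filter fun b => f b < f a).card : ℤ), ?_⟩
  intro a b t h1 h2 h3 h4 h5
  have hab := hf a (Finset.mem_univ _) b (Finset.mem_univ _) ⟨t, h1, h2, h3, h4, h5⟩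
  rw [Nat.cast_lt]
  apply Finset.card_lt_card
  rw [Finset.ssubset_iff_of_subset]
  · exact ⟨a, by simpa using hab, by simp⟩
  · intro c hc
    simp only [Finset.mem_filter, Finset.mem_univ, true_and] at hc ⊢
    exact hc.trans hab

/-- Integer data of a planar straight-line drawing. -/
structure SL {V : Type} (G : SimpleGraph V) where
  X : V → ℤ
  Y : V → ℤ
  inj : ∀ u v, X u = X v → Y u = Y v → u = v
  VE : ∀ u v w, G.Adj u v → w ≠ u → w ≠ v → (((X w : ℝ), (Y w : ℝ)) : Pt) ∉
    segment ℝ (((X u : ℝ), (Y u : ℝ)) : Pt) ((X v : ℝ), (Y v : ℝ))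
  EE : ∀ u v x z (P : Pt), G.Adj u v → G.Adj x z → s(u, v) ≠ s(x, z) →
    P ∈ segment ℝ (((X u : ℝ), (Y u : ℝ)) : Pt) ((X v : ℝ), (Y v : ℝ)) →
    P ∈ segment ℝ (((X x : ℝ), (Y x : ℝ)) : Pt) ((X z : ℝ), (Y z : ℝ)) →
    ∃ c, (c = u ∨ c = v) ∧ (c = x ∨ c = z) ∧ P.2 = Y c

namespace SL

variable {V : Type} {G : SimpleGraph V}

/-- Abscissa of the line through `u` and `v` at height `t`. -/
noncomputable def ln (S : SL G) (u v : V) (t : ℝ) : ℝ :=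
  ((S.Y v : ℝ) - t) / ((S.Y v : ℝ) - S.Y u) * S.X u + (t - S.Y u) / ((S.Y v : ℝ) - S.Y u) * S.X v

lemma ln_left (S : SL G) {u v : V} (h : S.Y u < S.Y v) : S.ln u v (S.Y u) = S.X u := by
  have hd : (S.Y u : ℝ) < S.Y v := by exact_mod_cast h
  have hd' : (S.Y v : ℝ) - S.Y u ≠ 0 := by linarith
  unfold ln
  field_simp
  ring

lemma ln_right (S : SL G) {u v : V} (h : S.Y u < S.Y v) : S.ln u v (S.Y v) = S.X v := by
  have hd : (S.Y u : ℝ) < S.Y v := by exact_mod_cast h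
  have hd' : (S.Y v : ℝ) - S.Y u ≠ 0 := by linarith
  unfold ln
  field_simp
  ring

lemma ln_affine (S : SL G) (u v : V) : ∃ c d : ℝ, ∀ t, S.ln u v t = c + d * t := by
  refine ⟨((S.Y v : ℝ) * S.X u - S.Y u * S.X v) / ((S.Y v : ℝ) - S.Y u),
    ((S.X v : ℝ) - S.X u) / ((S.Y v : ℝ) - S.Y u), fun t => ?_⟩
  unfold ln
  ring

lemma ln_mem (S : SL G) {u v : V} (h : S.Y u < S.Y v) {t : ℝ} (h1 : (S.Y u : ℝ) ≤ t)
    (h2 : t ≤ S.Y v) : ((S.ln u v t, t) : Pt) ∈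
      segment ℝ (((S.X u : ℝ), (S.Y u : ℝ)) : Pt) ((S.X v : ℝ), (S.Y v : ℝ)) := by
  have hd : (S.Y u : ℝ) < S.Y v := by exact_mod_cast h
  have hd' : (S.Y v : ℝ) - S.Y u ≠ 0 := by linarith
  refine ⟨((S.Y v : ℝ) - t) / ((S.Y v : ℝ) - S.Y u), (t - S.Y u) / ((S.Y v : ℝ) - S.Y u),
    div_nonneg (by linarith) (by linarith), div_nonneg (by linarith) (by linarith), ?_, ?_⟩
  · field_simp
    ring
  · ext
    · simp [ln]
    · simp
      field_simp
      ring

lemma hor_mem (S : SL G) {u v : V} (h : S.Y u = S.Y v) {t : ℝ} (h1 : (S.X u : ℝ) ≤ t)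
    (h2 : t ≤ S.X v) : ((t, (S.Y u : ℝ)) : Pt) ∈
      segment ℝ (((S.X u : ℝ), (S.Y u : ℝ)) : Pt) ((S.X v : ℝ), (S.Y v : ℝ)) := by
  have : ((t, (S.Y u : ℝ)) : Pt) ∈ (fun b : ℝ => (b, (S.Y u : ℝ))) ''
      segment ℝ (S.X u : ℝ) (S.X v) :=
    ⟨t, by rw [segment_eq_Icc (h1.trans h2)]; exact ⟨h1, h2⟩, rfl⟩
  rw [Prod.image_mk_segment_left] at this
  rwa [← h]

/-- Interiors of distinct edges do not meet. -/
lemma ln_ne (S : SL G) {u v x z : V} (ha : G.Adj u v) (hb : G.Adj x z) (hne : s(u, v) ≠ s(x, z))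
    {t : ℝ} (h1 : (S.Y u : ℝ) < t) (h2 : t < S.Y v) (h3 : (S.Y x : ℝ) < t) (h4 : t < S.Y z) :
    S.ln u v t ≠ S.ln x z t := by
  intro he
  have huv : S.Y u < S.Y v := by exact_mod_cast h1.trans h2
  have hxz : S.Y x < S.Y z := by exact_mod_cast h3.trans h4
  have m1 := S.ln_mem huv h1.le h2.le
  have m2 := S.ln_mem hxz h3.le h4.le
  rw [← he] at m2
  obtain ⟨c, hc, -, hP⟩ := S.EE u v x z _ ha hb hne m1 m2
  simp only at hP
  rcases hc with rfl | rfl <;> linarith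

/-- A vertex does not lie on an edge crossing its row. -/
lemma ln_ne_vert (S : SL G) {u v w : V} (ha : G.Adj u v) (h1 : S.Y u < S.Y w)
    (h2 : S.Y w < S.Y v) : S.ln u v (S.Y w) ≠ S.X w := by
  intro he
  have m1 := S.ln_mem (h1.trans h2) (t := S.Y w) (by exact_mod_cast h1.le) (by exact_mod_cast h2.le)
  rw [he] at m1
  exact S.VE u v w ha (by rintro rfl; omega) (by rintro rfl; omega) m1

abbrev Ed (S : SL G) : Type := {p : V × V // G.Adj p.1 p.2 ∧ S.Y p.1 < S.Y p.2}

/-- Sweep objects: left ends, right ends, edges. -/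
abbrev Ob (S : SL G) : Type := V ⊕ V ⊕ S.Ed

noncomputable def lo (S : SL G) : S.Ob → ℝ
  | Sum.inl v => S.Y v
  | Sum.inr (Sum.inl v) => S.Y v
  | Sum.inr (Sum.inr e) => S.Y e.1.1

noncomputable def hi (S : SL G) : S.Ob → ℝ
  | Sum.inl v => S.Y v
  | Sum.inr (Sum.inl v) => S.Y v
  | Sum.inr (Sum.inr e) => S.Y e.1.2

noncomputable def key (S : SL G) : S.Ob → ℝ → ℝ ×ₗ ℕ
  | Sum.inl v, _ => toLex ((S.X v : ℝ), 0)
  | Sum.inr (Sum.inl v), _ => toLex ((S.X v : ℝ), 2)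
  | Sum.inr (Sum.inr e), t => toLex (S.ln e.1.1 e.1.2 t, 1)

lemma key_edge (S : SL G) (e f : S.Ed) (t : ℝ) :
    S.key (Sum.inr (Sum.inr e)) t < S.key (Sum.inr (Sum.inr f)) t ↔
      S.ln e.1.1 e.1.2 t < S.ln f.1.1 f.1.2 t := by
  simp [key, Prod.Lex.lt_iff]

lemma WC (S : SL G) (a b : S.Ob) (t t' : ℝ) (a1 : S.lo a ≤ t) (a2 : t ≤ S.hi a)
    (b1 : S.lo b ≤ t) (b2 : t ≤ S.hi b) (a3 : S.lo a ≤ t') (a4 : t' ≤ S.hi a)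
    (b3 : S.lo b ≤ t') (b4 : t' ≤ S.hi b) (h : S.key a t < S.key b t) :
    S.key a t' ≤ S.key b t' := by
  have triv : t = t' → S.key a t' ≤ S.key b t' := by
    rintro rfl
    exact h.le
  rcases a with v | v | e
  · simp only [lo, hi] at a1 a2 a3 a4
    exact triv (by linarith)
  · simp only [lo, hi] at a1 a2 a3 a4
    exact triv (by linarith)
  rcases b with v | v | f
  · simp only [lo, hi] at b1 b2 b3 b4
    exact triv (by linarith)
  · simp only [lo, hi] at b1 b2 b3 b4
    exact triv (by linarith)
  by_contra hc
  rw [not_le, key_edge] at hc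
  rw [key_edge] at h
  simp only [lo, hi] at *
  have hne : s(e.1.1, e.1.2) ≠ s(f.1.1, f.1.2) := by
    intro hs
    have he := e.2.2
    have hf := f.2.2
    rw [Sym2.eq_iff] at hs
    rcases hs with ⟨h1, h2⟩ | ⟨h1, h2⟩
    · rw [h1, h2] at h
      exact lt_irrefl _ h
    · rw [h1, h2] at he
      omega
  obtain ⟨c, d, hl⟩ := S.ln_affine e.1.1 e.1.2
  obtain ⟨c', d', hl'⟩ := S.ln_affine f.1.1 f.1.2
  -- the crossing height
  have key : ∃ s, min t t' < s ∧ s < max t t' ∧ S.ln e.1.1 e.1.2 s = S.ln f.1.1 f.1.2 s := by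
    simp only [hl, hl'] at h hc ⊢
    have hdd : d - d' ≠ 0 := by
      intro h0
      have : d = d' := by linarith
      subst this
      linarith
    have hs : c + d * ((c' - c) / (d - d')) = c' + d' * ((c' - c) / (d - d')) := by
      field_simp
      ring
    have hs' : (c' - c) = (d - d') * ((c' - c) / (d - d')) := by
      field_simp
    refine ⟨(c' - c) / (d - d'), ?_, ?_, hs⟩
    · generalize (c' - c) / (d - d') = s at hs'
      rcases lt_or_gt_of_ne hdd with g | g
      · rw [min_lt_iff]
        right
        nlinarith
      · rw [min_lt_iff]
        left
        nlinarith
    · generalize (c' - c) / (d - d') = s at hs'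
      rcases lt_or_gt_of_ne hdd with g | g
      · rw [lt_max_iff]
        left
        nlinarith
      · rw [lt_max_iff]
        right
        nlinarith
  obtain ⟨s, s1, s2, s3⟩ := key
  refine S.ln_ne e.2.1 f.2.1 hne ?_ ?_ ?_ ?_ s3
  · exact lt_of_le_of_lt (le_min a1 a3) s1
  · exact s2.trans_le (max_le a2 a4)
  · exact lt_of_le_of_lt (le_min b1 b3) s1
  · exact s2.trans_le (max_le b2 b4)

theorem exists_FVR [Fintype V] (S : SL G) : ∃ F : FVR G, F.Tight ∧ ∀ v, F.y v = S.Y v := by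
  classical
  obtain ⟨f, hf⟩ := sweep S.lo S.hi S.key S.WC
  let l : V → ℤ := fun v => f (Sum.inl v)
  let r : V → ℤ := fun v => f (Sum.inr (Sum.inl v))
  let g : V → V → ℤ := fun u v => if h : G.Adj u v ∧ S.Y u < S.Y v then
    f (Sum.inr (Sum.inr ⟨(u, v), h⟩)) else 0
  have hg : ∀ u v (h : G.Adj u v ∧ S.Y u < S.Y v),
    g u v = f (Sum.inr (Sum.inr ⟨(u, v), h⟩)) := fun u v h => dif_pos h
  let px : V → V → ℤ := fun u v => if S.Y u < S.Y v then g u v else if S.Y v < S.Y u then g v u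
    else if S.X u < S.X v then r u else l u
  have hpu : ∀ u v, S.Y u < S.Y v → px u v = g u v := fun u v h => if_pos h
  have hpd : ∀ u v, S.Y v < S.Y u → px u v = g v u := fun u v h => by
    simp only [px]
    rw [if_neg (by omega), if_pos h]
  have hpl : ∀ u v, S.Y u = S.Y v → S.X u < S.X v → px u v = r u := fun u v h h' => by
    simp only [px]
    rw [if_neg (by omega), if_neg (by omega), if_pos h']
  have hpr : ∀ u v, S.Y u = S.Y v → S.X v < S.X u → px u v = l u := fun u v h h' => by
    simp only [px]
    rw [if_neg (by omega), if_neg (by omega), if_neg (by omega)]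
  have hlr : ∀ v, l v < r v := fun v => by
    apply hf _ _ (S.Y v) <;> simp [lo, hi, key, Prod.Lex.lt_iff]
  have hrow : ∀ u v, S.Y u = S.Y v → S.X u < S.X v → r u < l v := fun u v h h' => by
    apply hf _ _ (S.Y v) <;> simp [lo, hi, key, Prod.Lex.lt_iff, h, h']
  have hrow' : ∀ u v, S.Y u = S.Y v → r u < l v → S.X u < S.X v := by
    intro u v h h'
    have a1 := hlr u
    have a2 := hlr v
    rcases lt_trichotomy (S.X u) (S.X v) with c | c | c
    · exact c
    · have := S.inj u v c h
      subst this
      omega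
    · have := hrow v u h.symm c
      omega
  -- edges against vertices
  have hEL : ∀ u v w, G.Adj u v → S.Y u < S.Y v → S.Y u ≤ S.Y w → S.Y w ≤ S.Y v →
      S.ln u v (S.Y w) < S.X w → g u v < l w := by
    intro u v w ha h h1 h2 h3
    rw [hg u v ⟨ha, h⟩]
    apply hf _ _ (S.Y w) <;> simp [lo, hi, key, Prod.Lex.lt_iff, h1, h2, h3]
  have hRE : ∀ u v w, G.Adj u v → S.Y u < S.Y v → S.Y u ≤ S.Y w → S.Y w ≤ S.Y v →
      S.X w < S.ln u v (S.Y w) → r w < g u v := by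
    intro u v w ha h h1 h2 h3
    rw [hg u v ⟨ha, h⟩]
    apply hf _ _ (S.Y w) <;> simp [lo, hi, key, Prod.Lex.lt_iff, h1, h2, h3]
  have hinc : ∀ u v w, G.Adj u v → S.Y u < S.Y v → S.Y u ≤ S.Y w → S.Y w ≤ S.Y v →
      S.ln u v (S.Y w) = S.X w → l w ≤ g u v ∧ g u v ≤ r w := by
    intro u v w ha h h1 h2 h3
    rw [hg u v ⟨ha, h⟩]
    constructor
    · apply le_of_lt
      apply hf _ _ (S.Y w) <;> simp [lo, hi, key, Prod.Lex.lt_iff, h1, h2, h3]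
    · apply le_of_lt
      apply hf _ _ (S.Y w) <;> simp [lo, hi, key, Prod.Lex.lt_iff, h1, h2, h3]
  have hXne : ∀ u v, u ≠ v → S.Y u = S.Y v → S.X u < S.X v ∨ S.X v < S.X u := by
    intro u v h1 h2
    exact lt_or_gt_of_ne fun h => h1 (S.inj u v h h2)
  refine ⟨⟨S.Y, l, r, px, fun v => (hlr v).le, ?_, ?_, ?_, ?_, ?_, ?_, ?_⟩, ?_, fun _ => rfl⟩
  · intro u v ha
    rcases lt_trichotomy (S.Y u) (S.Y v) with h | h | h
    · rw [hpu u v h]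
      exact hinc u v u ha h le_rfl h.le (S.ln_left h)
    · have := hlr u
      rcases hXne u v ha.ne h with h' | h'
      · rw [hpl u v h h']
        omega
      · rw [hpr u v h h']
        omega
    · rw [hpd u v h]
      exact hinc v u u ha.symm h h.le le_rfl (S.ln_right h)
  · intro u v ha hne
    rcases lt_or_gt_of_ne hne with h | h
    · rw [hpu u v h, hpd v u h]
    · rw [hpd u v h, hpu v u h]
  · intro u v hne h
    rcases hXne u v hne h with h' | h'
    · exact Or.inl (hrow u v h h')
    · exact Or.inr (hrow v u h.symm h')
  · intro u v w ha h1 h2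
    rw [hpu u v (h1.trans h2)]
    rcases lt_or_gt_of_ne (S.ln_ne_vert ha h1 h2) with h | h
    · exact Or.inl (hEL u v w ha (h1.trans h2) h1.le h2.le h)
    · exact Or.inr (hRE u v w ha (h1.trans h2) h1.le h2.le h)
  · intro u v x z ha hb hne huv hxz huz hxv
    rw [hpu u v huv, hpu x z hxz]
    have huv' : (S.Y u : ℝ) < S.Y v := by exact_mod_cast huv
    have hxz' : (S.Y x : ℝ) < S.Y z := by exact_mod_cast hxz
    have huz' : (S.Y u : ℝ) < S.Y z := by exact_mod_cast huz
    have hxv' : (S.Y x : ℝ) < S.Y v := by exact_mod_cast hxv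
    obtain ⟨t, ht1, ht2⟩ : ∃ t : ℝ, max (S.Y u : ℝ) (S.Y x) < t ∧ t < min (S.Y v : ℝ) (S.Y z) :=
      exists_between (by simp [*])
    rw [max_lt_iff] at ht1
    rw [lt_min_iff] at ht2
    rw [hg u v ⟨ha, huv⟩, hg x z ⟨hb, hxz⟩]
    rcases lt_or_gt_of_ne (S.ln_ne ha hb hne ht1.1 ht2.1 ht1.2 ht2.2) with h | h
    · exact ne_of_lt (hf _ _ t ht1.1.le ht2.1.le ht1.2.le ht2.2.le ((S.key_edge _ _ _).2 h))
    · exact ne_of_gt (hf _ _ t ht1.2.le ht2.2.le ht1.1.le ht2.1.le ((S.key_edge _ _ _).2 h))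
  · rintro u v w ha h hw ⟨h1, h2⟩
    have c1 := hrow' u w hw.symm h1
    have c2 := hrow' w v (hw.trans h) h2
    have c1' : (S.X u : ℝ) ≤ S.X w := by exact_mod_cast c1.le
    have c2' : (S.X w : ℝ) ≤ S.X v := by exact_mod_cast c2.le
    have := S.hor_mem h c1' c2'
    rw [← hw] at this
    exact S.VE u v w ha (by rintro rfl; omega) (by rintro rfl; omega) (by rwa [hw] at this ⊢)
  · rintro u v x z ha hb h hx hz ⟨h1, h2⟩
    rw [hpu x z (hx.trans hz)] at h1 h2
    have a1 := hlr u
    have a2 := hlr v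
    have i1 : (S.X u : ℝ) ≤ S.ln x z (S.Y u) := by
      by_contra hc
      have := hEL x z u hb (hx.trans hz) hx.le hz.le (not_le.1 hc)
      omega
    have i2 : S.ln x z (S.Y u) ≤ S.X v := by
      by_contra hc
      have := hRE x z v hb (hx.trans hz) (by omega) (by omega) (by rw [← h]; exact not_le.1 hc)
      omega
    have m1 := S.hor_mem h i1 i2
    have m2 := S.ln_mem (hx.trans hz) (t := S.Y u) (by exact_mod_cast hx.le)
      (by exact_mod_cast hz.le)
    obtain ⟨c, -, hc, hP⟩ := S.EE u v x z _ ha hb (by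
      intro hs
      rw [Sym2.eq_iff] at hs
      rcases hs with ⟨rfl, rfl⟩ | ⟨rfl, rfl⟩ <;> omega) m1 m2
    have : S.Y u = S.Y c := Int.cast_inj.1 hP
    rcases hc with rfl | rfl <;> omega
  · intro u v ha h h'
    have := hrow' u v h h'
    exact ⟨hpl u v h this, hpr v u h.symm this⟩

end SL

theorem straightLine_to_flatVR {V : Type} [Fintype V] {G : SimpleGraph V} {h : ℕ}
    (D : PolylineDrawing G) (hs : D.IsStraightLine) (hpl : D.IsPlanar) (hIntC : D.IntCoords)
    (hh : D.InHeight h) :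
    ∃ D : OrthDrawing G, D.IsPlanar ∧ D.IsFlat ∧ D.IsVR ∧ D.IntCoords ∧ D.InHeight h := by
  obtain ⟨hinj, -, hVE, hEE⟩ := hpl
  have hcurve : ∀ u v, D.curve u v = segment ℝ (D.pos u) (D.pos v) := by
    intro u v
    rw [PolylineDrawing.curve, PolylineDrawing.chain, hs u v, List.nil_append, chainSet_pair]
  choose X hX using fun v => (hIntC (D.pos v) (Or.inl ⟨v, rfl⟩)).1
  choose Y hY using fun v => (hIntC (D.pos v) (Or.inl ⟨v, rfl⟩)).2
  have hpos : ∀ v, D.pos v = ((X v : ℝ), (Y v : ℝ)) := fun v => Prod.ext (hX v) (hY v)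
  let S : SL G :=
    { X := X
      Y := Y
      inj := fun u v h1 h2 => hinj (by rw [hpos, hpos, h1, h2])
      VE := fun u v w ha hu hv => by
        have := hVE u v w ha hu hv
        rwa [hcurve, hpos, hpos, hpos] at this
      EE := fun u v x z P ha hb hne h1 h2 => by
        have := hEE u v x z ha hb hne (a := P) (by
          rw [hcurve, hcurve, hpos, hpos, hpos, hpos]
          exact ⟨h1, h2⟩)
        obtain ⟨c, ⟨c1, c2⟩, rfl⟩ := this
        exact ⟨c, c1, c2, hY c⟩ }
  obtain ⟨F, hT, hF⟩ := S.exists_FVR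
  obtain ⟨y0, hy0⟩ := hh
  refine ⟨F.drawing, F.drawing_planar hT, fun v => rfl, fun u v ha => ?_, ?_, ⟨y0, ?_⟩⟩
  · rw [F.drawing_chain ha]; rfl
  · intro q hq
    obtain ⟨v, k, rfl⟩ := F.drawing_points q hq
    exact ⟨⟨k, rfl⟩, ⟨F.y v, rfl⟩⟩
  · intro q hq
    obtain ⟨v, k, rfl⟩ := F.drawing_points q hq
    have := hy0 (D.pos v) (Or.inl ⟨v, rfl⟩)
    rw [hY v] at this
    rw [hF v]
    exact this


/-- A finite simple planar graph has a planar straight-line drawing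
of height `h` if and only if it has a planar flat visibility representation of
height `h`. -/
theorem straightLine_height_iff_flatVR_height {V : Type} [Fintype V]
    (G : SimpleGraph V) (hplanar : HasPlanarEmbedding G) (h : ℕ) (hh : 0 < h) :
    (∃ D : PolylineDrawing G, D.IsStraightLine ∧ D.IsPlanar ∧ D.IntCoords ∧
      D.InHeight h) ↔
    (∃ D : OrthDrawing G, D.IsPlanar ∧ D.IsFlat ∧ D.IsVR ∧ D.IntCoords ∧
      D.InHeight h) := by
  constructor
  · rintro ⟨D, hs, hp, hi, hH⟩
    exact straightLine_to_flatVR D hs hp hi hH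
  · rintro ⟨D, hp, hf, hv, hi, hH⟩
    exact flatVR_to_straightLine D hp hf hv hi hH
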